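/- Let a, b ∈ ℝ satisfy a + b ≥ (j+1)/(2j+1) and min{a, b} > 1/(2(2j+1)). Then there exists a constant C > 0 depending only on j, a, b (and in particular independent of λ) such that for every real λ ≥ 1 and all nonnegative measurable f, g : Ż_λ × ℝ → [0,∞], ((1/λ)Σ_{k∈(1/λ)ℤ} ∫_ℝ (⟨τ − k^{2j+1}⟩^{−a}(f∗g)(k,τ))² dτ)^{1/2} ≤ C·‖⟨σ⟩^b f‖_{L²_λ}·‖g‖_{L²_λ}. -/

import Mathlib

open MeasureTheory
open scoped ENNReal

noncomputable section

/-- Japanese bracket `⟨x⟩ = (1+x²)^{1/2}`. -/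
def jap (x : ℝ) : ℝ := Real.sqrt (1 + x ^ 2)

/-- Modulation `σ = τ − k^{2j+1}` at the frequency `k = m/λ ∈ Ż_λ`. -/
def sigL (j : ℕ) (lam : ℝ) (m : ℤ) (τ : ℝ) : ℝ := τ - ((m : ℝ) / lam) ^ (2 * j + 1)

/-- Convolution on `Ż_λ × ℝ` (frequencies indexed by `m ∈ ℤ∖{0}`, `k = m/λ`):
`(f∗g)(k,τ) = (1/λ)Σ_{k₁≠0, k−k₁≠0} ∫ f(k₁,τ₁) g(k−k₁,τ−τ₁) dτ₁`. -/
def convL (lam : ℝ) (f g : ℤ → ℝ → ℝ≥0∞) (m : ℤ) (τ : ℝ) : ℝ≥0∞ :=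
  ENNReal.ofReal (1 / lam) *
    ∑' m₁ : ℤ, if m₁ ≠ 0 ∧ m - m₁ ≠ 0 then ∫⁻ τ₁, f m₁ τ₁ * g (m - m₁) (τ - τ₁) else 0

/-- `L²_λ` norm: `((1/λ) Σ_k ∫ f(k,τ)² dτ)^{1/2}`. -/
def L2L (lam : ℝ) (f : ℤ → ℝ → ℝ≥0∞) : ℝ≥0∞ :=
  (ENNReal.ofReal (1 / lam) * ∑' m : ℤ, ∫⁻ τ, (f m τ) ^ 2) ^ (1 / 2 : ℝ)

/-- Modulation weight `⟨σ⟩^b f`. -/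
def wtL (j : ℕ) (lam b : ℝ) (f : ℤ → ℝ → ℝ≥0∞) : ℤ → ℝ → ℝ≥0∞ :=
  fun m τ => ENNReal.ofReal (jap (sigL j lam m τ) ^ b) * f m τ

/-!
Write `p = 2j + 1`, let `σ₁` and `σ` be the modulations of `f` and of the output, and let `q` be
the frequency carried by `g`. By duality the estimate is a bound for a trilinear form with weight
`⟨σ⟩^{-a} ⟨σ₁⟩^{-b}`. Fix `1/p < θ < 1/(2j)` with `θ ≤ 2 min(a,b)`, and `κ = 1 + 1/p - θ ∈ (0,1)`.
As `(θ + κ)/2 = (j+1)/(2j+1) ≤ a + b`, the weight is at most `(S^{-θ} s^{-κ})^{1/2}`, where `S` is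
the larger and `s` the smaller of `⟨σ⟩` and `⟨σ₁⟩` (`weight_le`). Cauchy–Schwarz reduces everything
to bounds, uniform in `λ`, for the integral of `S^{-θ} s^{-κ}` over one free variable; which variable
is frozen depends on the region.

* If `|q|^p ≤ S`, freeze the variable that carries `S`. The frequencies then range over
  `|q| ≤ S^{1/p}`, which is `O(S^{1/p})` lattice points of weight `1/λ`, and
  `S^{-θ} S^{1/p} ∫_{⟨s⟩ ≤ S} ⟨s⟩^{-κ} ds ≲ S^{1/p + 1 - θ - κ} = 1` (`far_bound`).
* If `S ≤ |q|^p`, freeze the variable of `g`. For a given smaller modulation, the larger one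
  is `c - ((k + q)^p - k^p)`. On each side of `k = -q/2` the function `(k + q)^p - k^p` is monotone
  and degenerate at worst to order `2j`: the distance of its values is at least `|q|` times the
  `2j`-th power of the distance of the points (`exists_center`). Since `2jθ < 1`, the sum over `k`
  converges, with a contribution `s^{-θ}` from the lattice points nearest to the resonant
  frequencies and `|q|^{1 - pθ}` from the others (`resonant_sum`). Integrated against `s^{-κ}` over
  `s ≤ |q|^p`, both contributions are bounded, the first because `θ + κ > 1` (`near_bound`).

The vanishing of `f` and `g` at zero frequency plays no role: when `q = 0` the second region is empty.
-/

/-! ### Lattice sums of powers of distances -/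

lemma sum_rpow_le (δ : ℝ) (h0 : 0 < δ) (h1 : δ < 1) (N : ℕ) :
    ∑ n ∈ Finset.range N, ((n : ℝ) + 1) ^ (-δ) ≤ (N : ℝ) ^ (1 - δ) / (1 - δ) := by
  have hd : 0 < 1 - δ := by linarith
  induction N with
  | zero => simp [Real.zero_rpow hd.ne']
  | succ N ih =>
    rw [Finset.sum_range_succ]
    have hN : (0 : ℝ) < (N : ℝ) + 1 := by positivity
    -- Bernoulli's inequality for `(1 - 1/(N+1))^{1-δ}`
    have hb := rpow_one_add_le_one_add_mul_self (s := -(1 / ((N : ℝ) + 1))) (p := 1 - δ)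
      (by rw [neg_le_neg_iff, div_le_one hN]; linarith [(Nat.cast_nonneg N : (0 : ℝ) ≤ N)])
      hd.le (by linarith)
    have e1 : (1 : ℝ) + -(1 / ((N : ℝ) + 1)) = N / (N + 1) := by field_simp; ring
    rw [e1, Real.div_rpow (by positivity) hN.le, div_le_iff₀ (by positivity)] at hb
    have e2 : ((N : ℝ) + 1) ^ (-δ) = ((N : ℝ) + 1) ^ (1 - δ) * (1 / ((N : ℝ) + 1)) := by
      rw [show -δ = (1 - δ) - 1 by ring, Real.rpow_sub_one hN.ne']; ring
    rw [e2]
    push_cast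
    calc _ ≤ (N : ℝ) ^ (1 - δ) / (1 - δ) + ((N : ℝ) + 1) ^ (1 - δ) * (1 / ((N : ℝ) + 1)) := by
          gcongr
      _ ≤ _ := by
        rw [le_div_iff₀ hd, add_mul, div_mul_cancel₀ _ hd.ne']
        linarith

lemma tsum_int_rpow_le (δ : ℝ) (h0 : 0 < δ) (h1 : δ < 1) (L : ℝ) (hL : 0 ≤ L) :
    ∑' i : ℤ, (if i ≠ 0 ∧ |(i : ℝ)| ≤ L then ENNReal.ofReal (|(i : ℝ)| ^ (-δ)) else 0) ≤
      ENNReal.ofReal (2 * L ^ (1 - δ) / (1 - δ)) := by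
  have hd : 0 < 1 - δ := by linarith
  have key : ∑' n : ℕ, (if (n : ℝ) + 1 ≤ L then ENNReal.ofReal (((n : ℝ) + 1) ^ (-δ)) else 0) ≤
      ENNReal.ofReal (L ^ (1 - δ) / (1 - δ)) := by
    rw [tsum_eq_sum (s := Finset.range ⌊L⌋₊)]
    · calc _ ≤ ∑ n ∈ Finset.range ⌊L⌋₊, ENNReal.ofReal (((n : ℝ) + 1) ^ (-δ)) := by
            gcongr; split_ifs <;> simp
        _ = ENNReal.ofReal (∑ n ∈ Finset.range ⌊L⌋₊, ((n : ℝ) + 1) ^ (-δ)) := by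
            rw [ENNReal.ofReal_sum_of_nonneg]; intros; positivity
        _ ≤ _ := by
            apply ENNReal.ofReal_le_ofReal
            refine (sum_rpow_le δ h0 h1 _).trans ?_
            gcongr
            exact Nat.floor_le hL
    · intro n hn
      rw [if_neg]
      intro h
      apply hn
      rw [Finset.mem_range]
      exact Nat.lt_of_succ_le (Nat.le_floor (by push_cast; exact h))
  rw [tsum_of_add_one_of_neg_add_one ENNReal.summable ENNReal.summable]
  have e1 : ∀ n : ℕ, (if ((n : ℤ) + 1) ≠ 0 ∧ |(((n : ℤ) + 1 : ℤ) : ℝ)| ≤ L then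
      ENNReal.ofReal (|(((n : ℤ) + 1 : ℤ) : ℝ)| ^ (-δ)) else 0) =
      (if (n : ℝ) + 1 ≤ L then ENNReal.ofReal (((n : ℝ) + 1) ^ (-δ)) else 0) := by
    intro n
    have : |(((n : ℤ) + 1 : ℤ) : ℝ)| = (n : ℝ) + 1 := by
      push_cast; exact abs_of_nonneg (by positivity)
    rw [this]
    congr 1
    simp only [ne_eq, eq_iff_iff, and_iff_right_iff_imp]
    intro _; omega
  have e2 : ∀ n : ℕ, (if (-((n : ℤ) + 1)) ≠ 0 ∧ |((-((n : ℤ) + 1) : ℤ) : ℝ)| ≤ L then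
      ENNReal.ofReal (|((-((n : ℤ) + 1) : ℤ) : ℝ)| ^ (-δ)) else 0) =
      (if (n : ℝ) + 1 ≤ L then ENNReal.ofReal (((n : ℝ) + 1) ^ (-δ)) else 0) := by
    intro n
    have : |((-((n : ℤ) + 1) : ℤ) : ℝ)| = (n : ℝ) + 1 := by
      rw [Int.cast_neg, abs_neg]
      push_cast; exact abs_of_nonneg (by positivity)
    rw [this]
    congr 1
    simp only [ne_eq, eq_iff_iff, and_iff_right_iff_imp]
    intro _; omega
  simp only [e1, e2]
  simp only [ne_eq, not_true_eq_false, false_and, if_false, add_zero]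
  calc _ ≤ _ := add_le_add key key
    _ = _ := by rw [← ENNReal.ofReal_add (by positivity) (by positivity)]; congr 1; ring

/-- The interval `[-R, R]` holds `O(λR)` points of the lattice `ℤ/λ` when `λR ≥ 1`. -/
lemma lattice_count (lam : ℝ) (hlam : 1 ≤ lam) (R : ℝ) (hR : 1 ≤ R) :
    ENNReal.ofReal (1 / lam) * ∑' m : ℤ, (if |(m : ℝ) / lam| ≤ R then (1 : ℝ≥0∞) else 0) ≤
      ENNReal.ofReal (3 * R) := by
  have hl : 0 < lam := by linarith
  set N : ℤ := ⌊lam * R⌋ with hN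
  have hNR : (N : ℝ) ≤ lam * R := Int.floor_le _
  have hN0 : 0 ≤ N := Int.floor_nonneg.2 (by positivity)
  have : ∑' m : ℤ, (if |(m : ℝ) / lam| ≤ R then (1 : ℝ≥0∞) else 0) ≤
      ENNReal.ofReal (2 * (lam * R) + 1) := by
    rw [tsum_eq_sum (s := Finset.Icc (-N) N)]
    · calc _ ≤ ∑ m ∈ Finset.Icc (-N) N, (1 : ℝ≥0∞) := by
            gcongr; split_ifs <;> simp
        _ = ((2 * N + 1).toNat : ℝ≥0∞) := by
            simp only [Finset.sum_const, Int.card_Icc, nsmul_eq_mul, mul_one]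
            congr 2; ring
        _ ≤ _ := by
            rw [← ENNReal.ofReal_natCast]
            apply ENNReal.ofReal_le_ofReal
            have : (((2 * N + 1).toNat : ℤ) : ℝ) = 2 * N + 1 := by
              rw [Int.toNat_of_nonneg (by omega)]; push_cast; ring
            rw [Int.cast_natCast] at this
            rw [this]; linarith
    · intro m hm
      rw [if_neg]
      intro h
      apply hm
      rw [abs_div, abs_of_pos hl, div_le_iff₀ hl, abs_le] at h
      rw [Finset.mem_Icc]
      have h1 : m ≤ N := Int.le_floor.2 (by linarith)
      have h2 : -m ≤ N := Int.le_floor.2 (by push_cast; linarith)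
      omega
  calc _ ≤ ENNReal.ofReal (1 / lam) * ENNReal.ofReal (2 * (lam * R) + 1) := by gcongr
    _ ≤ _ := by
      rw [← ENNReal.ofReal_mul (by positivity)]
      apply ENNReal.ofReal_le_ofReal
      rw [one_div, inv_mul_le_iff₀ hl]
      nlinarith

/-- A sum over the lattice `ℤ/λ` of a function supported within distance `R` of `x` and bounded by `A`
and by `B |k - x|^{-δ}`: the two lattice points nearest to `x` contribute `A/λ` each, the others
a Riemann sum for `∫_{|t| ≤ R} B |t|^{-δ} dt`. -/
lemma lattice_sum (δ : ℝ) (h0 : 0 < δ) (h1 : δ < 1) (lam : ℝ) (hlam : 1 ≤ lam) (x A B R : ℝ)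
    (hA : 0 ≤ A) (hB : 0 ≤ B) (hR : 0 ≤ R) (v : ℤ → ℝ≥0∞)
    (hvA : ∀ m, v m ≤ ENNReal.ofReal A)
    (hvB : ∀ m : ℤ, (m : ℝ) / lam - x ≠ 0 → v m ≤ ENNReal.ofReal (B * |(m : ℝ) / lam - x| ^ (-δ)))
    (hvR : ∀ m : ℤ, R < |(m : ℝ) / lam - x| → v m = 0) :
    ENNReal.ofReal (1 / lam) * ∑' m, v m ≤
      ENNReal.ofReal (2 * A + 4 / (1 - δ) * B * R ^ (1 - δ)) := by
  have hl : 0 < lam := by linarith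
  have hd : 0 < 1 - δ := by linarith
  set m0 : ℤ := ⌊lam * x⌋ with hm0
  have hf1 : (m0 : ℝ) ≤ lam * x := Int.floor_le _
  have hf2 : lam * x < m0 + 1 := Int.lt_floor_add_one _
  rw [← (Equiv.addRight m0).tsum_eq v]
  simp only [Equiv.coe_addRight]
  -- away from the two lattice points nearest to `x`, the distance is at least `|i| / (2λ)`
  have hpt : ∀ i : ℤ, v (i + m0) ≤
      (if i = 0 then ENNReal.ofReal A else 0) + (if i = 1 then ENNReal.ofReal A else 0) +
      ENNReal.ofReal (B * (2 * lam) ^ δ) * (if i ≠ 0 ∧ |(i : ℝ)| ≤ 2 * lam * R then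
        ENNReal.ofReal (|(i : ℝ)| ^ (-δ)) else 0) := by
    intro i
    by_cases hi0 : i = 0
    · subst hi0
      rw [if_pos rfl, add_assoc]
      exact (hvA _).trans le_self_add
    by_cases hi1 : i = 1
    · subst hi1
      rw [if_pos rfl, add_assoc, if_neg (by decide), zero_add]
      exact (hvA _).trans le_self_add
    have hdist : |(i : ℝ)| / (2 * lam) ≤ |((i + m0 : ℤ) : ℝ) / lam - x| := by
      have e : ((i + m0 : ℤ) : ℝ) / lam - x = ((i : ℝ) + m0 - lam * x) / lam := by
        push_cast; field_simp
      rw [e, abs_div, abs_of_pos hl, div_le_div_iff₀ (by positivity) hl]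
      have : |(i : ℝ)| ≤ 2 * |(i : ℝ) + m0 - lam * x| := by
        rcases lt_or_gt_of_ne hi0 with h | h
        · have h' : (i : ℝ) ≤ -1 := by exact_mod_cast (by omega : i ≤ -1)
          rw [abs_of_neg (by linarith), abs_of_neg (by linarith)]; linarith
        · have h' : (2 : ℝ) ≤ i := by exact_mod_cast (by omega : 2 ≤ i)
          rw [abs_of_pos (by linarith), abs_of_pos (by linarith)]; linarith
      nlinarith
    have hipos : 0 < |(i : ℝ)| := by positivity
    have hdpos : 0 < |((i + m0 : ℤ) : ℝ) / lam - x| := lt_of_lt_of_le (by positivity) hdist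
    rw [if_neg hi0, if_neg hi1, zero_add, zero_add]
    by_cases hc : |(i : ℝ)| ≤ 2 * lam * R
    · rw [if_pos ⟨hi0, hc⟩, ← ENNReal.ofReal_mul (by positivity)]
      refine (hvB _ (abs_pos.1 hdpos)).trans (ENNReal.ofReal_le_ofReal ?_)
      rw [mul_assoc]
      gcongr
      calc _ ≤ (|(i : ℝ)| / (2 * lam)) ^ (-δ) :=
            Real.rpow_le_rpow_of_nonpos (by positivity) hdist (by linarith)
        _ = _ := by
          rw [Real.div_rpow hipos.le (by positivity), Real.rpow_neg (by positivity : 0 ≤ 2 * lam),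
            div_inv_eq_mul, mul_comm]
    · rw [hvR]
      · exact zero_le
      · push Not at hc
        refine lt_of_lt_of_le ?_ hdist
        rw [lt_div_iff₀ (by positivity)]; linarith
  calc ENNReal.ofReal (1 / lam) * ∑' i, v (i + m0)
      ≤ ENNReal.ofReal (1 / lam) * (ENNReal.ofReal A + ENNReal.ofReal A +
        ENNReal.ofReal (B * (2 * lam) ^ δ) *
          ENNReal.ofReal (2 * (2 * lam * R) ^ (1 - δ) / (1 - δ))) := by
        gcongr
        refine (ENNReal.tsum_le_tsum hpt).trans ?_
        rw [ENNReal.tsum_add, ENNReal.tsum_add, ENNReal.tsum_mul_left, tsum_ite_eq, tsum_ite_eq]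
        gcongr
        exact tsum_int_rpow_le δ h0 h1 _ (by positivity)
    _ ≤ _ := by
      rw [← ENNReal.ofReal_add hA hA, ← ENNReal.ofReal_mul (by positivity),
        ← ENNReal.ofReal_add (by positivity) (by positivity), ← ENNReal.ofReal_mul (by positivity)]
      apply ENNReal.ofReal_le_ofReal
      have e : B * (2 * lam) ^ δ * (2 * (2 * lam * R) ^ (1 - δ) / (1 - δ)) =
          lam * (4 / (1 - δ) * B * R ^ (1 - δ)) := by
        rw [Real.mul_rpow (by positivity) hR]
        have : (2 * lam) ^ δ * (2 * lam) ^ (1 - δ) = 2 * lam := by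
          rw [← Real.rpow_add (by positivity)]; simp
        calc _ = ((2 * lam) ^ δ * (2 * lam) ^ (1 - δ)) * (B * 2 * R ^ (1 - δ) / (1 - δ)) := by ring
          _ = _ := by rw [this]; ring
      rw [e, one_div, inv_mul_le_iff₀ hl, mul_add]
      nlinarith

/-! ### The resonance function -/

/-- With `S_j(y) = (y+r)^(2j+1) - (y-r)^(2j+1)` and `T_j(y) = (y+r)^(2j+1) + (y-r)^(2j+1)`, both are
nonnegative and nondecreasing on `[0, ∞)`. The induction rests on
`S_{j+1} = (y²+r²) S_j + 2yr T_j` and `T_{j+1} = (y²+r²) T_j + 2yr S_j`. -/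
lemma S_facts (j : ℕ) (r : ℝ) (hr : 0 < r) (y z : ℝ) (hz : 0 ≤ z) (hzy : z ≤ y) :
    2 * r * y ^ (2 * j) ≤ (y + r) ^ (2 * j + 1) - (y - r) ^ (2 * j + 1) ∧
    0 ≤ (z + r) ^ (2 * j + 1) - (z - r) ^ (2 * j + 1) ∧
    0 ≤ (z + r) ^ (2 * j + 1) + (z - r) ^ (2 * j + 1) ∧
    (z + r) ^ (2 * j + 1) - (z - r) ^ (2 * j + 1) ≤
      (y + r) ^ (2 * j + 1) - (y - r) ^ (2 * j + 1) ∧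
    (z + r) ^ (2 * j + 1) + (z - r) ^ (2 * j + 1) ≤
      (y + r) ^ (2 * j + 1) + (y - r) ^ (2 * j + 1) := by
  have hy : 0 ≤ y := hz.trans hzy
  induction j with
  | zero => norm_num; exact ⟨by linarith, by linarith, by linarith, by linarith⟩
  | succ j ih =>
    obtain ⟨h1, h2, h3, h4, h5⟩ := ih
    have e : ∀ w : ℝ, (w + r) ^ (2 * (j + 1) + 1) - (w - r) ^ (2 * (j + 1) + 1) =
      (w ^ 2 + r ^ 2) * ((w + r) ^ (2 * j + 1) - (w - r) ^ (2 * j + 1)) +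
      2 * w * r * ((w + r) ^ (2 * j + 1) + (w - r) ^ (2 * j + 1)) := by intro w; ring
    have e' : ∀ w : ℝ, (w + r) ^ (2 * (j + 1) + 1) + (w - r) ^ (2 * (j + 1) + 1) =
      (w ^ 2 + r ^ 2) * ((w + r) ^ (2 * j + 1) + (w - r) ^ (2 * j + 1)) +
      2 * w * r * ((w + r) ^ (2 * j + 1) - (w - r) ^ (2 * j + 1)) := by intro w; ring
    simp only [e, e']
    generalize (y + r) ^ (2 * j + 1) - (y - r) ^ (2 * j + 1) = A at *
    generalize (z + r) ^ (2 * j + 1) - (z - r) ^ (2 * j + 1) = B at *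
    generalize (y + r) ^ (2 * j + 1) + (y - r) ^ (2 * j + 1) = A' at *
    generalize (z + r) ^ (2 * j + 1) + (z - r) ^ (2 * j + 1) = B' at *
    have hA : 0 ≤ A := h2.trans h4
    have hA' : 0 ≤ A' := h3.trans h5
    refine ⟨?_, by positivity, by positivity, by gcongr, by gcongr⟩
    have : 2 * r * y ^ (2 * (j + 1)) = y ^ 2 * (2 * r * y ^ (2 * j)) := by ring
    rw [this]
    calc _ ≤ y ^ 2 * A := by gcongr
      _ ≤ _ := by nlinarith [mul_nonneg (sq_nonneg r) hA, mul_nonneg (mul_nonneg hy hr.le) hA']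

/-- The quantitative monotonicity of `y ↦ (y+r)^(2j+1) - (y-r)^(2j+1)` on `[0, ∞)`, degenerate
at `y = 0` only. -/
lemma S_gap (j : ℕ) (hj : 1 ≤ j) (r : ℝ) (hr : 0 < r) (y z : ℝ) (hz : 0 ≤ z) (hzy : z ≤ y) :
    2 * r * (y - z) ^ (2 * j) ≤ ((y + r) ^ (2 * j + 1) - (y - r) ^ (2 * j + 1)) -
      ((z + r) ^ (2 * j + 1) - (z - r) ^ (2 * j + 1)) := by
  have hy : 0 ≤ y := hz.trans hzy
  obtain ⟨j, rfl⟩ : ∃ i, j = i + 1 := ⟨j - 1, by omega⟩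
  obtain ⟨h1, h2, h3, h4, h5⟩ := S_facts j r hr y z hz hzy
  have e : ∀ w : ℝ, (w + r) ^ (2 * (j + 1) + 1) - (w - r) ^ (2 * (j + 1) + 1) =
    (w ^ 2 + r ^ 2) * ((w + r) ^ (2 * j + 1) - (w - r) ^ (2 * j + 1)) +
    2 * w * r * ((w + r) ^ (2 * j + 1) + (w - r) ^ (2 * j + 1)) := by intro w; ring
  simp only [e]
  generalize (y + r) ^ (2 * j + 1) - (y - r) ^ (2 * j + 1) = A at *
  generalize (z + r) ^ (2 * j + 1) - (z - r) ^ (2 * j + 1) = B at *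
  generalize (y + r) ^ (2 * j + 1) + (y - r) ^ (2 * j + 1) = A' at *
  generalize (z + r) ^ (2 * j + 1) + (z - r) ^ (2 * j + 1) = B' at *
  have hA : 0 ≤ A := h2.trans h4
  have hp : (y - z) ^ (2 * j) ≤ y ^ (2 * j) := by gcongr <;> linarith
  calc 2 * r * (y - z) ^ (2 * (j + 1)) = (y - z) ^ 2 * (2 * r * (y - z) ^ (2 * j)) := by ring
    _ ≤ (y ^ 2 - z ^ 2) * A := by
      have h6 : (y - z) ^ 2 ≤ y ^ 2 - z ^ 2 := by nlinarith
      have h7 : 2 * r * (y - z) ^ (2 * j) ≤ A := le_trans (by gcongr) h1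
      have h8 : 0 ≤ y - z := by linarith
      exact mul_le_mul h6 h7 (by positivity) (by nlinarith)
    _ ≤ _ := by
      have h6 : 2 * z * r * B' ≤ 2 * y * r * A' := by gcongr
      have h7 : (z ^ 2 + r ^ 2) * B ≤ (z ^ 2 + r ^ 2) * A := by gcongr
      nlinarith

/-- `y0` is the solution in `[0, ∞)` of `(y+r)^(2j+1) - (y-r)^(2j+1) = c` if there is one, and `0`
otherwise. -/
lemma exists_center_pos (j : ℕ) (hj : 1 ≤ j) (r : ℝ) (hr : 0 < r) (c : ℝ) :
    ∃ y0 : ℝ, ∀ y : ℝ, 0 ≤ y →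
      2 * r * |y - y0| ^ (2 * j) ≤ |c - ((y + r) ^ (2 * j + 1) - (y - r) ^ (2 * j + 1))| := by
  set ψ : ℝ → ℝ := fun y => (y + r) ^ (2 * j + 1) - (y - r) ^ (2 * j + 1) with hψ
  have gap : ∀ y z, 0 ≤ z → z ≤ y → 2 * r * (y - z) ^ (2 * j) ≤ ψ y - ψ z :=
    fun y z => S_gap j hj r hr y z
  by_cases hc : c ≤ ψ 0
  · refine ⟨0, fun y hy => ?_⟩
    have := gap y 0 le_rfl hy
    rw [abs_of_nonneg (by linarith : 0 ≤ y - 0), abs_sub_comm]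
    exact le_trans (by linarith) (le_abs_self _)
  · push Not at hc
    -- `Y` is large enough for the intermediate value theorem to reach `c` on `[0, Y]`
    set Y : ℝ := 1 + |c| / (2 * r) with hY
    have hY1 : 1 ≤ Y := by have : 0 ≤ |c| / (2 * r) := by positivity
                           linarith
    have hYc : c ≤ ψ Y := by
      have h1 := (S_facts j r hr Y 0 le_rfl (by linarith)).1
      have h2 : Y ≤ Y ^ (2 * j) := le_self_pow₀ hY1 (by omega)
      have h3 : 2 * r * Y = 2 * r + |c| := by rw [hY]; field_simp
      have h4 : 2 * r * Y ≤ 2 * r * Y ^ (2 * j) := by gcongr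
      have := le_abs_self c
      show c ≤ (Y + r) ^ (2 * j + 1) - (Y - r) ^ (2 * j + 1)
      linarith
    have hcont : ContinuousOn ψ (Set.Icc 0 Y) := by fun_prop
    obtain ⟨y0, hy0, hy0c⟩ := intermediate_value_Icc (by linarith : (0:ℝ) ≤ Y) hcont ⟨hc.le, hYc⟩
    refine ⟨y0, fun y hy => ?_⟩
    change _ ≤ |c - ψ y|
    rw [← hy0c]
    rcases le_total y0 y with h | h
    · rw [abs_of_nonneg (by linarith : 0 ≤ y - y0), abs_sub_comm]
      exact (gap y y0 hy0.1 h).trans (le_abs_self _)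
    · rw [abs_sub_comm y y0, abs_of_nonneg (by linarith : 0 ≤ y0 - y)]
      exact (gap y0 y hy h).trans (le_abs_self _)

/-- The resonance function `c - ((k+q)^(2j+1) - k^(2j+1))` is small only near the two resonant
frequencies `k = -q/2 ± y0`. -/
lemma exists_center (j : ℕ) (hj : 1 ≤ j) (q : ℝ) (hq : q ≠ 0) (c : ℝ) :
    ∃ y0 : ℝ, ∀ k : ℝ, |q| * |(|k + q / 2| - y0)| ^ (2 * j) ≤
      |c - ((k + q) ^ (2 * j + 1) - k ^ (2 * j + 1))| := by
  have hodd : Odd (2 * j + 1) := ⟨j, rfl⟩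
  -- it suffices to treat `q > 0`, the phase being odd in `q` once centred at `k = -q/2`
  have key : ∀ q : ℝ, 0 < q → ∀ c : ℝ, ∃ y0 : ℝ, ∀ y : ℝ, q * |(|y| - y0)| ^ (2 * j) ≤
      |c - ((y + q / 2) ^ (2 * j + 1) - (y - q / 2) ^ (2 * j + 1))| := by
    intro q hq c
    obtain ⟨y0, h⟩ := exists_center_pos j hj (q / 2) (by positivity) c
    refine ⟨y0, fun y => ?_⟩
    have := h |y| (abs_nonneg y)
    rw [show 2 * (q / 2) = q by ring] at this
    rcases abs_choice y with e | e
    · rwa [e] at this ⊢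
    · rw [e] at this ⊢
      convert this using 3
      rw [show -y + q / 2 = -(y - q / 2) by ring, show -y - q / 2 = -(y + q / 2) by ring,
        hodd.neg_pow, hodd.neg_pow]
      ring
  rcases lt_or_gt_of_ne hq with h | h
  · obtain ⟨y0, h0⟩ := key (-q) (by linarith) (-c)
    refine ⟨y0, fun k => ?_⟩
    rw [abs_of_neg h, ← abs_neg (c - _)]
    convert h0 (k + q / 2) using 2
    rw [show k + q / 2 + -q / 2 = k by ring, show k + q / 2 - -q / 2 = k + q by ring]
    ring
  · obtain ⟨y0, h0⟩ := key q h c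
    refine ⟨y0, fun k => ?_⟩
    rw [abs_of_pos h]
    convert h0 (k + q / 2) using 2
    rw [show k + q / 2 + q / 2 = k + q by ring, show k + q / 2 - q / 2 = k by ring]

/-! ### Bounds for the weights -/

lemma one_le_jap (x : ℝ) : 1 ≤ jap x := by
  rw [jap, Real.one_le_sqrt]; nlinarith [sq_nonneg x]

lemma jap_pos (x : ℝ) : 0 < jap x := zero_lt_one.trans_le (one_le_jap x)

lemma abs_le_jap (x : ℝ) : |x| ≤ jap x := by
  rw [jap, ← Real.sqrt_sq_eq_abs]; gcongr; linarith

lemma jap_neg (x : ℝ) : jap (-x) = jap x := by simp [jap]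

lemma continuous_jap : Continuous jap := by unfold jap; fun_prop

lemma measurable_jap : Measurable jap := continuous_jap.measurable

lemma lintegral_jap_le (κ : ℝ) (h0 : 0 < κ) (h1 : κ < 1) (S : ℝ) (hS : 0 ≤ S) :
    ∫⁻ s, (if jap s ≤ S then ENNReal.ofReal (jap s ^ (-κ)) else 0) ≤
      ENNReal.ofReal (2 / (1 - κ) * S ^ (1 - κ)) := by
  have hd : 0 < 1 - κ := by linarith
  set G : ℝ → ℝ≥0∞ := (Set.Ioc 0 S).indicator (fun s => ENNReal.ofReal (s ^ (-κ))) with hG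
  have hGm : Measurable G := by
    refine Measurable.indicator ?_ measurableSet_Ioc
    fun_prop
  have hGi : ∫⁻ s, G s = ENNReal.ofReal (S ^ (1 - κ) / (1 - κ)) := by
    rw [hG, lintegral_indicator measurableSet_Ioc, ← ofReal_integral_eq_lintegral_ofReal]
    · rw [← intervalIntegral.integral_of_le hS, integral_rpow (Or.inl (by linarith)),
        show -κ + 1 = 1 - κ by ring, Real.zero_rpow hd.ne', sub_zero]
    · exact (intervalIntegrable_iff_integrableOn_Ioc_of_le hS).1
        (intervalIntegral.intervalIntegrable_rpow' (by linarith))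
    · filter_upwards [ae_restrict_mem measurableSet_Ioc] with s hs
      exact Real.rpow_nonneg hs.1.le _
  have hae : ∀ᵐ s : ℝ, (if jap s ≤ S then ENNReal.ofReal (jap s ^ (-κ)) else 0) ≤ G s + G (-s) := by
    filter_upwards [Measure.ae_ne volume (0 : ℝ)] with s hs
    split_ifs with h
    · have h2 := abs_le_jap s
      have h3 : jap s ^ (-κ) ≤ |s| ^ (-κ) :=
        Real.rpow_le_rpow_of_nonpos (by positivity) h2 (by linarith)
      rcases lt_or_gt_of_ne hs with h' | h'
      · rw [abs_of_neg h'] at h2 h3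
        refine le_trans ?_ le_add_self
        rw [hG, Set.indicator_of_mem (by constructor <;> linarith)]
        exact ENNReal.ofReal_le_ofReal h3
      · rw [abs_of_pos h'] at h2 h3
        refine le_trans ?_ le_self_add
        rw [hG, Set.indicator_of_mem (by constructor <;> linarith)]
        exact ENNReal.ofReal_le_ofReal h3
    · exact zero_le
  calc _ ≤ ∫⁻ s, (G s + G (-s)) := lintegral_mono_ae hae
    _ = _ := by
      rw [lintegral_add_left hGm, lintegral_neg_eq_self (μ := volume) G, hGi,
        ← ENNReal.ofReal_add (by positivity) (by positivity)]
      congr 1; ring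

lemma lintegral_jap_lt_top (r : ℝ) (hr : 1 < r) :
    ∫⁻ s, ENNReal.ofReal (jap s ^ (-r)) < ∞ := by
  have h := integrable_rpow_neg_one_add_norm_sq (E := ℝ) (μ := volume) (r := r) (by simpa using hr)
  have e : ∀ s : ℝ, jap s ^ (-r) = (1 + ‖s‖ ^ 2) ^ (-r / 2) := by
    intro s
    rw [jap, Real.sqrt_eq_rpow, ← Real.rpow_mul (by positivity), Real.norm_eq_abs, sq_abs]
    congr 1; ring
  simp only [e]
  exact h.lintegral_lt_top

/-- For a fixed value `S` of the larger bracket, the frequency difference is confined to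
`|q| ≤ S^{1/p}`, and the weights `S^{-θ}⟨σ⟩^{-κ}` integrate to a bounded quantity. -/
lemma far_bound (j : ℕ) (θ κ : ℝ) (h0 : 0 < κ) (h1 : κ < 1)
    (hκ : κ = 1 + 1 / (2 * (j : ℝ) + 1) - θ) (lam : ℝ) (hlam : 1 ≤ lam) (m0 : ℤ) (S : ℝ)
    (hS : 1 ≤ S) :
    ENNReal.ofReal (1 / lam) * ∑' m : ℤ, ∫⁻ τ,
      (if |((m - m0 : ℤ) : ℝ) / lam| ^ (2 * j + 1) ≤ S ∧ jap (sigL j lam m τ) ≤ S then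
        ENNReal.ofReal (S ^ (-θ) * jap (sigL j lam m τ) ^ (-κ)) else 0) ≤
      ENNReal.ofReal (6 / (1 - κ)) := by
  have hd : 0 < 1 - κ := by linarith
  have hS0 : 0 < S := by linarith
  have hp : (0 : ℝ) < 2 * (j : ℝ) + 1 := by positivity
  set R := S ^ (1 / (2 * (j : ℝ) + 1)) with hR
  have hR1 : 1 ≤ R := Real.one_le_rpow hS (by positivity)
  have hRp : R ^ (2 * j + 1) = S := by
    rw [hR, ← Real.rpow_natCast, ← Real.rpow_mul hS0.le]
    push_cast
    rw [one_div, inv_mul_cancel₀ hp.ne', Real.rpow_one]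
  have hm : ∀ m : ℤ, ∫⁻ τ,
      (if |((m - m0 : ℤ) : ℝ) / lam| ^ (2 * j + 1) ≤ S ∧ jap (sigL j lam m τ) ≤ S then
        ENNReal.ofReal (S ^ (-θ) * jap (sigL j lam m τ) ^ (-κ)) else 0) ≤
      ENNReal.ofReal (S ^ (-θ) * (2 / (1 - κ) * S ^ (1 - κ))) *
        (if |((m - m0 : ℤ) : ℝ) / lam| ≤ R then 1 else 0) := by
    intro m
    by_cases hc : |((m - m0 : ℤ) : ℝ) / lam| ^ (2 * j + 1) ≤ S
    · have hc' : |((m - m0 : ℤ) : ℝ) / lam| ≤ R := by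
        rw [← hRp] at hc
        exact le_of_pow_le_pow_left₀ (by omega) (by positivity) hc
      simp only [hc, true_and, hc', if_true, mul_one]
      have := lintegral_sub_right_eq_self (μ := volume) (fun s =>
        (if jap s ≤ S then ENNReal.ofReal (S ^ (-θ) * jap s ^ (-κ)) else 0))
        (((m : ℝ) / lam) ^ (2 * j + 1))
      refine (le_of_eq this).trans ?_
      have e : ∀ s, (if jap s ≤ S then ENNReal.ofReal (S ^ (-θ) * jap s ^ (-κ)) else 0) =
          ENNReal.ofReal (S ^ (-θ)) *
            (if jap s ≤ S then ENNReal.ofReal (jap s ^ (-κ)) else 0) := by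
        intro s
        rw [ENNReal.ofReal_mul (by positivity), mul_ite, mul_zero]
      simp only [e]
      rw [lintegral_const_mul' _ _ ENNReal.ofReal_ne_top, ENNReal.ofReal_mul (by positivity)]
      gcongr
      exact lintegral_jap_le κ h0 h1 S hS0.le
    · simp only [hc, false_and, if_false, lintegral_zero]
      exact zero_le
  calc _ ≤ ENNReal.ofReal (1 / lam) * ∑' m : ℤ,
        ENNReal.ofReal (S ^ (-θ) * (2 / (1 - κ) * S ^ (1 - κ))) *
        (if |((m - m0 : ℤ) : ℝ) / lam| ≤ R then 1 else 0) := by gcongr with m; exact hm m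
    _ = ENNReal.ofReal (S ^ (-θ) * (2 / (1 - κ) * S ^ (1 - κ))) * (ENNReal.ofReal (1 / lam) *
        ∑' m : ℤ, (if |(m : ℝ) / lam| ≤ R then 1 else 0)) := by
      rw [ENNReal.tsum_mul_left, ← (Equiv.subRight m0).tsum_eq
        (fun m : ℤ => (if |(m : ℝ) / lam| ≤ R then (1 : ℝ≥0∞) else 0))]
      simp only [Equiv.subRight_apply]
      ring
    _ ≤ ENNReal.ofReal (S ^ (-θ) * (2 / (1 - κ) * S ^ (1 - κ))) * ENNReal.ofReal (3 * R) := by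
      gcongr
      exact lattice_count lam hlam R hR1
    _ = _ := by
      rw [← ENNReal.ofReal_mul (by positivity)]
      congr 1
      have : S ^ (-θ) * S ^ (1 - κ) * R = 1 := by
        rw [hR, ← Real.rpow_add hS0, ← Real.rpow_add hS0, hκ]
        convert Real.rpow_zero S using 2
        ring
      calc _ = 6 / (1 - κ) * (S ^ (-θ) * S ^ (1 - κ) * R) := by ring
        _ = _ := by rw [this, mul_one]

/-- The sum over the lattice, for a fixed value `T` of the smaller bracket. The two terms come from
the lattice points nearest to the resonant frequencies and from all the others. -/
lemma resonant_sum (j : ℕ) (hj : 1 ≤ j) (θ : ℝ) (h0 : 0 < θ) (h1 : 2 * (j : ℝ) * θ < 1)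
    (lam : ℝ) (hlam : 1 ≤ lam) (q c T : ℝ) (hq : q ≠ 0) (hT : 1 ≤ T) :
    ENNReal.ofReal (1 / lam) * ∑' m : ℤ,
      (if T ≤ jap (c - (((m : ℝ) / lam + q) ^ (2 * j + 1) - ((m : ℝ) / lam) ^ (2 * j + 1))) ∧
          jap (c - (((m : ℝ) / lam + q) ^ (2 * j + 1) - ((m : ℝ) / lam) ^ (2 * j + 1))) ≤
            |q| ^ (2 * j + 1) then
        ENNReal.ofReal (jap (c - (((m : ℝ) / lam + q) ^ (2 * j + 1) -
          ((m : ℝ) / lam) ^ (2 * j + 1))) ^ (-θ)) else 0) ≤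
      ENNReal.ofReal (4 * T ^ (-θ) + 8 / (1 - 2 * (j : ℝ) * θ) *
        |q| ^ (1 - (2 * (j : ℝ) + 1) * θ)) := by
  obtain ⟨y0, hy0⟩ := exists_center j hj q hq c
  have hjr : (1 : ℝ) ≤ j := by exact_mod_cast hj
  set δ := 2 * (j : ℝ) * θ with hδ
  have hδ0 : 0 < δ := by positivity
  have hq0 : 0 < |q| := abs_pos.2 hq
  set w : ℤ → ℝ := fun m =>
    c - (((m : ℝ) / lam + q) ^ (2 * j + 1) - ((m : ℝ) / lam) ^ (2 * j + 1)) with hw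
  set v : ℤ → ℝ≥0∞ := fun m =>
    (if T ≤ jap (w m) ∧ jap (w m) ≤ |q| ^ (2 * j + 1) then
        ENNReal.ofReal (jap (w m) ^ (-θ)) else 0) with hv
  change ENNReal.ofReal (1 / lam) * ∑' m : ℤ, v m ≤ _
  -- each half-line of frequencies (split at the centre `-q/2`) carries one resonant frequency
  have half : ∀ (P : ℤ → Prop) [DecidablePred P] (x : ℝ),
      (∀ m, P m → |(|(m : ℝ) / lam + q / 2| - y0)| = |(m : ℝ) / lam - x|) →
      ENNReal.ofReal (1 / lam) * ∑' m : ℤ, (if P m then v m else 0) ≤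
        ENNReal.ofReal (2 * T ^ (-θ) + 4 / (1 - δ) * |q| ^ (1 - (2 * (j : ℝ) + 1) * θ)) := by
    intro P _ x hP
    have := lattice_sum δ hδ0 h1 lam hlam x (T ^ (-θ)) (|q| ^ (-θ)) |q| (by positivity)
      (by positivity) hq0.le (fun m => if P m then v m else 0) ?_ ?_ ?_
    · convert this using 3
      rw [mul_assoc, ← Real.rpow_add hq0]
      congr 2; rw [hδ]; ring
    · intro m
      by_cases hPm : P m
      · simp only [hPm, if_true, hv]
        split_ifs with h
        · exact ENNReal.ofReal_le_ofReal
            (Real.rpow_le_rpow_of_nonpos (by linarith) h.1 (by linarith))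
        · exact zero_le
      · simp [hPm]
    · intro m hm
      by_cases hPm : P m
      · simp only [hPm, if_true, hv]
        split_ifs with h
        · apply ENNReal.ofReal_le_ofReal
          have h2 := hy0 ((m : ℝ) / lam)
          rw [hP m hPm] at h2
          have hm' : 0 < |(m : ℝ) / lam - x| := abs_pos.2 hm
          calc jap (w m) ^ (-θ) ≤ (|q| * |(m : ℝ) / lam - x| ^ (2 * j)) ^ (-θ) :=
                Real.rpow_le_rpow_of_nonpos (by positivity) (h2.trans (abs_le_jap _))
                  (by linarith)
            _ = _ := by
              rw [Real.mul_rpow hq0.le (by positivity), ← Real.rpow_natCast,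
                ← Real.rpow_mul (by positivity), hδ]
              congr 2; push_cast; ring
        · exact zero_le
      · simp [hPm]
    · intro m hm
      by_cases hPm : P m
      · simp only [hPm, if_true, hv]
        rw [if_neg]
        rintro ⟨-, h⟩
        have h2 := hy0 ((m : ℝ) / lam)
        rw [hP m hPm] at h2
        have h3 : |q| ^ (2 * j) < |(m : ℝ) / lam - x| ^ (2 * j) :=
          pow_lt_pow_left₀ hm hq0.le (by omega)
        have h4 := mul_lt_mul_of_pos_left h3 hq0
        have h5 := (h2.trans (abs_le_jap _)).trans h
        rw [pow_succ'] at h5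
        linarith
      · simp [hPm]
  have a1 := half (fun m => 0 ≤ (m : ℝ) / lam + q / 2) (y0 - q / 2) (by
    intro m hm; rw [abs_of_nonneg hm]; congr 1; ring)
  have a2 := half (fun m => ¬ 0 ≤ (m : ℝ) / lam + q / 2) (-y0 - q / 2) (by
    intro m hm; rw [abs_of_neg (not_le.1 hm), ← abs_neg]; congr 1; ring)
  have e : ∀ m, v m = (if 0 ≤ (m : ℝ) / lam + q / 2 then v m else 0) +
      (if ¬ 0 ≤ (m : ℝ) / lam + q / 2 then v m else 0) := by
    intro m; by_cases h : 0 ≤ (m : ℝ) / lam + q / 2 <;> simp [h]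
  have hd : 0 < 1 - δ := by linarith
  rw [tsum_congr e, ENNReal.tsum_add, mul_add]
  refine (add_le_add a1 a2).trans ?_
  rw [← ENNReal.ofReal_add (by positivity) (by positivity)]
  apply ENNReal.ofReal_le_ofReal
  apply le_of_eq; ring

/-- For a fixed frequency difference `q`, with both brackets at most `|q|^p`, the weights
integrate to a bounded quantity; `s` is the smaller modulation. -/
lemma near_bound (j : ℕ) (hj : 1 ≤ j) (θ κ : ℝ) (hθ0 : 0 < θ) (hθ1 : 2 * (j : ℝ) * θ < 1)
    (h0 : 0 < κ) (h1 : κ < 1) (hκ : κ = 1 + 1 / (2 * (j : ℝ) + 1) - θ) :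
    ∃ C : ℝ, 0 ≤ C ∧ ∀ lam : ℝ, 1 ≤ lam → ∀ (q : ℝ) (c : ℝ → ℝ), Measurable c →
    ENNReal.ofReal (1 / lam) * ∑' m : ℤ, ∫⁻ s,
      (if jap s ≤ jap (c s - (((m : ℝ) / lam + q) ^ (2 * j + 1) - ((m : ℝ) / lam) ^ (2 * j + 1))) ∧
          jap (c s - (((m : ℝ) / lam + q) ^ (2 * j + 1) - ((m : ℝ) / lam) ^ (2 * j + 1))) ≤
            |q| ^ (2 * j + 1) then
        ENNReal.ofReal (jap (c s - (((m : ℝ) / lam + q) ^ (2 * j + 1) -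
          ((m : ℝ) / lam) ^ (2 * j + 1))) ^ (-θ) * jap s ^ (-κ)) else 0) ≤
      ENNReal.ofReal C := by
  have hp : (0 : ℝ) < 2 * (j : ℝ) + 1 := by positivity
  -- the exponent `1 + 1/p` is `θ + κ`
  set I : ℝ≥0∞ := ∫⁻ s, ENNReal.ofReal (jap s ^ (-(1 + 1 / (2 * (j : ℝ) + 1)))) with hI
  have hIt : I < ∞ := lintegral_jap_lt_top _ (by
    have : 0 < 1 / (2 * (j : ℝ) + 1) := by positivity
    linarith)
  have hd : 0 < 1 - κ := by linarith
  have hδ : 0 < 1 - 2 * (j : ℝ) * θ := by linarith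
  refine ⟨4 * I.toReal + 8 / (1 - 2 * (j : ℝ) * θ) * (2 / (1 - κ)), by positivity, ?_⟩
  intro lam hlam q c hc
  set Q := |q| ^ (2 * j + 1) with hQ
  by_cases hq : q = 0
  · have : Q = 0 := by rw [hQ, hq]; simp
    refine le_of_eq_of_le ?_ zero_le
    rw [this]
    convert mul_zero _
    rw [ENNReal.tsum_eq_zero]
    intro m
    convert lintegral_zero with s
    rw [if_neg]
    intro h
    have := jap_pos (c s - (((m : ℝ) / lam + q) ^ (2 * j + 1) - ((m : ℝ) / lam) ^ (2 * j + 1)))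
    linarith [h.2]
  have hq0 : 0 < |q| := abs_pos.2 hq
  -- sum over the lattice first, with the smaller modulation `s` fixed
  rw [← lintegral_tsum, ← lintegral_const_mul' _ _ ENNReal.ofReal_ne_top]
  swap
  · intro m
    have hm : Measurable fun s => jap (c s - (((m : ℝ) / lam + q) ^ (2 * j + 1) -
        ((m : ℝ) / lam) ^ (2 * j + 1))) := measurable_jap.comp (hc.sub_const _)
    refine (Measurable.ite ?_ ?_ measurable_const).aemeasurable
    · exact (measurableSet_le measurable_jap hm).inter (measurableSet_le hm measurable_const)
    · exact ((hm.pow_const _).mul (measurable_jap.pow_const _)).ennreal_ofReal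
  set E := 8 / (1 - 2 * (j : ℝ) * θ) * |q| ^ (1 - (2 * (j : ℝ) + 1) * θ) with hE
  have hE0 : 0 ≤ E := by positivity
  have hpt : ∀ s, ENNReal.ofReal (1 / lam) * ∑' m : ℤ,
      (if jap s ≤ jap (c s - (((m : ℝ) / lam + q) ^ (2 * j + 1) - ((m : ℝ) / lam) ^ (2 * j + 1))) ∧
          jap (c s - (((m : ℝ) / lam + q) ^ (2 * j + 1) - ((m : ℝ) / lam) ^ (2 * j + 1))) ≤ Q then
        ENNReal.ofReal (jap (c s - (((m : ℝ) / lam + q) ^ (2 * j + 1) -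
          ((m : ℝ) / lam) ^ (2 * j + 1))) ^ (-θ) * jap s ^ (-κ)) else 0) ≤
      ENNReal.ofReal 4 * ENNReal.ofReal (jap s ^ (-(1 + 1 / (2 * (j : ℝ) + 1)))) +
      ENNReal.ofReal E * (if jap s ≤ Q then ENNReal.ofReal (jap s ^ (-κ)) else 0) := by
    intro s
    have hs0 := jap_pos s
    by_cases hsQ : jap s ≤ Q
    · have h2 := resonant_sum j hj θ hθ0 hθ1 lam hlam q (c s) (jap s) hq (one_le_jap s)
      rw [if_pos hsQ]
      calc _ = ENNReal.ofReal (jap s ^ (-κ)) * (ENNReal.ofReal (1 / lam) * ∑' m : ℤ,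
            (if jap s ≤ jap (c s - (((m : ℝ) / lam + q) ^ (2 * j + 1) -
                ((m : ℝ) / lam) ^ (2 * j + 1))) ∧
              jap (c s - (((m : ℝ) / lam + q) ^ (2 * j + 1) - ((m : ℝ) / lam) ^ (2 * j + 1))) ≤ Q
            then ENNReal.ofReal (jap (c s - (((m : ℝ) / lam + q) ^ (2 * j + 1) -
              ((m : ℝ) / lam) ^ (2 * j + 1))) ^ (-θ)) else 0)) := by
              rw [mul_left_comm, ← ENNReal.tsum_mul_left (a := ENNReal.ofReal (jap s ^ (-κ)))]
              congr 1
              refine tsum_congr fun m => ?_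
              rw [mul_ite, mul_zero, ← ENNReal.ofReal_mul (by positivity), mul_comm (jap s ^ (-κ))]
        _ ≤ ENNReal.ofReal (jap s ^ (-κ)) * ENNReal.ofReal (4 * jap s ^ (-θ) + E) := by gcongr
        _ = _ := by
          rw [← ENNReal.ofReal_mul (by positivity), ← ENNReal.ofReal_mul (by positivity),
            ← ENNReal.ofReal_mul (by positivity), ← ENNReal.ofReal_add (by positivity)
            (by positivity)]
          congr 1
          have : jap s ^ (-(1 + 1 / (2 * (j : ℝ) + 1))) = jap s ^ (-κ) * jap s ^ (-θ) := by
            rw [← Real.rpow_add hs0]; congr 1; rw [hκ]; ring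
          rw [this]; ring
    · refine le_of_eq_of_le ?_ zero_le
      convert mul_zero _
      rw [ENNReal.tsum_eq_zero]
      intro m
      rw [if_neg]
      rintro ⟨h, h'⟩
      exact hsQ (h.trans h')
  calc _ ≤ ∫⁻ s, (ENNReal.ofReal 4 * ENNReal.ofReal (jap s ^ (-(1 + 1 / (2 * (j : ℝ) + 1)))) +
      ENNReal.ofReal E * (if jap s ≤ Q then ENNReal.ofReal (jap s ^ (-κ)) else 0)) :=
        lintegral_mono hpt
    _ = ENNReal.ofReal 4 * I +
        ENNReal.ofReal E * ∫⁻ s, (if jap s ≤ Q then ENNReal.ofReal (jap s ^ (-κ)) else 0) := by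
      rw [lintegral_add_left, lintegral_const_mul' _ _ ENNReal.ofReal_ne_top,
        lintegral_const_mul' _ _ ENNReal.ofReal_ne_top]
      exact ((measurable_jap.pow_const _).ennreal_ofReal).const_mul _
    _ ≤ ENNReal.ofReal 4 * ENNReal.ofReal I.toReal +
        ENNReal.ofReal E * ENNReal.ofReal (2 / (1 - κ) * Q ^ (1 - κ)) := by
      rw [ENNReal.ofReal_toReal hIt.ne]
      gcongr
      exact lintegral_jap_le κ h0 h1 Q (by positivity)
    _ = _ := by
      rw [← ENNReal.ofReal_mul (by positivity), ← ENNReal.ofReal_mul (by positivity),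
        ← ENNReal.ofReal_add (by positivity) (by positivity)]
      congr 1
      -- the powers of `|q|` cancel because `p (1 - κ) = p θ - 1`
      have : |q| ^ (1 - (2 * (j : ℝ) + 1) * θ) * Q ^ (1 - κ) = 1 := by
        rw [hQ, ← Real.rpow_natCast |q|, ← Real.rpow_mul hq0.le, ← Real.rpow_add hq0]
        convert Real.rpow_zero |q| using 2
        rw [hκ]; push_cast; field_simp; ring
      rw [hE]
      linear_combination (8 / (1 - 2 * (j : ℝ) * θ) * (2 / (1 - κ))) * this

/-! ### Cauchy–Schwarz and duality in `L²` -/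

lemma cauchy_schwarz {X : Type*} [MeasurableSpace X] (μ : Measure X) {f g : X → ℝ≥0∞}
    (hf : Measurable f) (hg : Measurable g) :
    ∫⁻ x, f x * g x ∂μ ≤ ((∫⁻ x, f x ^ 2 ∂μ) * ∫⁻ x, g x ^ 2 ∂μ) ^ (1 / 2 : ℝ) := by
  have := ENNReal.lintegral_mul_le_Lp_mul_Lq μ Real.HolderConjugate.two_two hf.aemeasurable
    hg.aemeasurable
  rw [ENNReal.mul_rpow_of_nonneg _ _ (by norm_num)]
  simpa using this

/-- Duality for the `L²` norm, with no integrability assumed. -/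
lemma l2_le_of_dual {X : Type*} [MeasurableSpace X] (μ : Measure X) [SigmaFinite μ]
    {u : X → ℝ≥0∞} (B : ℝ≥0∞)
    (h : ∀ v : X → ℝ≥0∞, Measurable v → ∫⁻ x, v x * u x ∂μ ≤ (B * ∫⁻ x, v x ^ 2 ∂μ) ^ (1 / 2 : ℝ)) :
    ∫⁻ x, u x ^ 2 ∂μ ≤ B := by
  -- every `L` below `∫ u²` is exceeded by `∫ g` for some simple `g ≤ u²` of finite integral; test
  -- against `v = g^{1/2}`, which gives `(∫ g)² ≤ B ∫ g`
  refine le_of_forall_lt fun L hL => ?_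
  rw [lintegral_eq_nnreal] at hL
  obtain ⟨φ, hL⟩ := lt_iSup_iff.1 hL
  obtain ⟨hφ, hL⟩ := lt_iSup_iff.1 hL
  rw [← SimpleFunc.lintegral_eq_lintegral] at hL
  obtain ⟨g, hgφ, hgt, hLg⟩ :=
    SimpleFunc.exists_lt_lintegral_simpleFunc_of_lt_lintegral (f := φ) hL
  have hg : ∀ x, (g x : ℝ≥0∞) ≤ u x ^ 2 := fun x =>
    (ENNReal.coe_le_coe.2 (hgφ x)).trans (hφ x)
  refine hLg.trans_le ?_
  have hm : Measurable fun x => ((g x : ℝ≥0∞)) := g.measurable.coe_nnreal_ennreal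
  have hsq : ∀ x, ((g x : ℝ≥0∞) ^ (1 / 2 : ℝ)) ^ 2 = g x := fun x => by
    rw [← ENNReal.rpow_natCast, ← ENNReal.rpow_mul]; norm_num
  have h1 := h (fun x => (g x : ℝ≥0∞) ^ (1 / 2 : ℝ)) (hm.pow_const _)
  simp only [hsq] at h1
  have h2 : ∫⁻ x, (g x : ℝ≥0∞) ∂μ ≤ (B * ∫⁻ x, (g x : ℝ≥0∞) ∂μ) ^ (1 / 2 : ℝ) := by
    refine le_trans (lintegral_mono fun x => ?_) h1
    have h3 : (g x : ℝ≥0∞) ^ (1 / 2 : ℝ) ≤ u x := by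
      calc (g x : ℝ≥0∞) ^ (1 / 2 : ℝ) ≤ (u x ^ 2) ^ (1 / 2 : ℝ) := by gcongr; exact hg x
        _ = u x := by rw [← ENNReal.rpow_natCast, ← ENNReal.rpow_mul]; norm_num
    calc (g x : ℝ≥0∞) = (g x : ℝ≥0∞) ^ (1 / 2 : ℝ) * (g x : ℝ≥0∞) ^ (1 / 2 : ℝ) := by
          rw [← sq, hsq]
      _ ≤ _ := by gcongr
  set I := ∫⁻ x, (g x : ℝ≥0∞) ∂μ
  by_cases hI : I = 0
  · rw [hI]; exact zero_le
  have h4 : I ^ 2 ≤ B * I := by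
    calc I ^ 2 ≤ ((B * I) ^ (1 / 2 : ℝ)) ^ 2 := by gcongr
      _ = B * I := by rw [← ENNReal.rpow_natCast, ← ENNReal.rpow_mul]; norm_num
  rw [sq] at h4
  exact (ENNReal.mul_le_mul_iff_left hI hgt.ne).1 h4

lemma half_sq (a : ℝ≥0∞) : (a ^ (1 / 2 : ℝ)) ^ 2 = a := by
  rw [← ENNReal.rpow_natCast, ← ENNReal.rpow_mul]; norm_num

lemma tri_aux {X : Type*} [MeasurableSpace X] {μ : Measure X} [SFinite μ] {A B : X → X → ℝ≥0∞}
    (hA : Measurable (Function.uncurry A)) (hB : Measurable (Function.uncurry B)) (a b : ℝ≥0∞)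
    (ha : ∫⁻ y, ∫⁻ z, A y z ^ 2 ∂μ ∂μ ≤ a) (hb : ∫⁻ y, ∫⁻ z, B y z ^ 2 ∂μ ∂μ ≤ b) :
    ∫⁻ y, ∫⁻ z, A y z * B y z ∂μ ∂μ ≤ (a * b) ^ (1 / 2 : ℝ) := by
  have h1 := cauchy_schwarz (μ.prod μ) hA hB
  rw [lintegral_prod (fun x => Function.uncurry A x * Function.uncurry B x)
    (hA.mul hB).aemeasurable, lintegral_prod _ (hA.pow_const 2).aemeasurable,
    lintegral_prod _ (hB.pow_const 2).aemeasurable] at h1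
  refine h1.trans ?_
  gcongr
  · exact ha
  · exact hb

section Trilinear

variable {X : Type*} [AddCommGroup X] [MeasurableSpace X] [MeasurableAdd₂ X] [MeasurableSub₂ X]
  (μ : Measure X) [SFinite μ] [μ.IsAddLeftInvariant]

/-- The trilinear form `∫∫ K(y,z)^{1/2} h(y+z) F(y) G(z)`. -/
def tri (K : X → X → ℝ≥0∞) (h F G : X → ℝ≥0∞) : ℝ≥0∞ :=
  ∫⁻ y, ∫⁻ z, K y z ^ (1 / 2 : ℝ) * (h (y + z) * F y * G z) ∂μ ∂μ

variable {μ} {K : X → X → ℝ≥0∞} {h F G : X → ℝ≥0∞}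

/-- Cauchy–Schwarz with the variable `z` of `G` held fixed. -/
lemma tri_le_fix_diff (hK : Measurable (Function.uncurry K)) (hh : Measurable h)
    (hF : Measurable F) (hG : Measurable G) (C : ℝ≥0∞) (hC : ∀ z, ∫⁻ y, K y z ∂μ ≤ C) :
    tri μ K h F G ≤
      (C * ((∫⁻ x, F x ^ 2 ∂μ) * ∫⁻ x, G x ^ 2 ∂μ) * ∫⁻ x, h x ^ 2 ∂μ) ^ (1 / 2 : ℝ) := by
  have hadd : Measurable fun p : X × X => p.1 + p.2 := measurable_add
  have := tri_aux (μ := μ) (A := fun y z => h (y + z) * F y)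
    (B := fun y z => K y z ^ (1 / 2 : ℝ) * G z)
    ((hh.comp hadd).mul (hF.comp measurable_fst))
    ((hK.pow_const _).mul (hG.comp measurable_snd))
    ((∫⁻ x, h x ^ 2 ∂μ) * ∫⁻ x, F x ^ 2 ∂μ) (C * ∫⁻ x, G x ^ 2 ∂μ) ?_ ?_
  · refine le_trans (le_of_eq ?_) (this.trans (le_of_eq ?_))
    · exact lintegral_congr fun y => lintegral_congr fun z => by ring
    · congr 1; ring
  · simp only [mul_pow]
    have e : ∀ y, ∫⁻ z, h (y + z) ^ 2 * F y ^ 2 ∂μ = (∫⁻ z, h z ^ 2 ∂μ) * F y ^ 2 := fun y => by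
      rw [lintegral_mul_const _ (by fun_prop),
        lintegral_add_left_eq_self (fun z => h z ^ 2)]
    simp only [e]
    rw [lintegral_const_mul _ (hF.pow_const 2)]
  · simp only [mul_pow, half_sq]
    rw [lintegral_lintegral_swap (hK.mul ((hG.comp measurable_snd).pow_const 2)).aemeasurable]
    have e : ∀ z, ∫⁻ y, K y z * G z ^ 2 ∂μ ≤ C * G z ^ 2 := fun z => by
      rw [lintegral_mul_const _ hK.of_uncurry_right]
      gcongr; exact hC z
    refine (lintegral_mono e).trans (le_of_eq ?_)
    rw [lintegral_const_mul _ (hG.pow_const 2)]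

/-- Cauchy–Schwarz with the output variable `x = y + z` held fixed. -/
lemma tri_le_fix_sum (hK : Measurable (Function.uncurry K)) (hh : Measurable h)
    (hF : Measurable F) (hG : Measurable G) (C : ℝ≥0∞) (hC : ∀ x, ∫⁻ y, K y (x - y) ∂μ ≤ C) :
    tri μ K h F G ≤
      (C * ((∫⁻ x, F x ^ 2 ∂μ) * ∫⁻ x, G x ^ 2 ∂μ) * ∫⁻ x, h x ^ 2 ∂μ) ^ (1 / 2 : ℝ) := by
  have hadd : Measurable fun p : X × X => p.1 + p.2 := measurable_add
  have hsub : Measurable fun p : X × X => (p.1, p.2 - p.1) :=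
    measurable_fst.prodMk (measurable_snd.sub measurable_fst)
  have hK' : Measurable (Function.uncurry fun y x => K y (x - y)) := hK.comp hsub
  have := tri_aux (μ := μ) (A := fun y z => F y * G z)
    (B := fun y z => K y z ^ (1 / 2 : ℝ) * h (y + z))
    ((hF.comp measurable_fst).mul (hG.comp measurable_snd))
    ((hK.pow_const _).mul (hh.comp hadd))
    ((∫⁻ x, F x ^ 2 ∂μ) * ∫⁻ x, G x ^ 2 ∂μ) (C * ∫⁻ x, h x ^ 2 ∂μ) ?_ ?_
  · refine le_trans (le_of_eq ?_) (this.trans (le_of_eq ?_))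
    · exact lintegral_congr fun y => lintegral_congr fun z => by ring
    · congr 1; ring
  · simp only [mul_pow]
    simp_rw [lintegral_const_mul _ (hG.pow_const 2)]
    rw [lintegral_mul_const _ (hF.pow_const 2)]
  · simp only [mul_pow, half_sq]
    have e0 : ∀ y, ∫⁻ z, K y z * h (y + z) ^ 2 ∂μ = ∫⁻ x, K y (x - y) * h x ^ 2 ∂μ := fun y => by
      rw [← lintegral_add_left_eq_self (fun x => K y (x - y) * h x ^ 2) y]
      simp
    simp only [e0]
    rw [lintegral_lintegral_swap (hK'.mul ((hh.comp measurable_snd).pow_const 2)).aemeasurable]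
    have e : ∀ x, ∫⁻ y, K y (x - y) * h x ^ 2 ∂μ ≤ C * h x ^ 2 := fun x => by
      rw [lintegral_mul_const _ hK'.of_uncurry_right]
      gcongr; exact hC x
    refine (lintegral_mono e).trans (le_of_eq ?_)
    rw [lintegral_const_mul _ (hh.pow_const 2)]

/-- Cauchy–Schwarz with the variable `y` of `F` held fixed. -/
lemma tri_le_fix_left (hK : Measurable (Function.uncurry K)) (hh : Measurable h)
    (hF : Measurable F) (hG : Measurable G) (C : ℝ≥0∞) (hC : ∀ y, ∫⁻ x, K y (x - y) ∂μ ≤ C) :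
    tri μ K h F G ≤
      (C * ((∫⁻ x, F x ^ 2 ∂μ) * ∫⁻ x, G x ^ 2 ∂μ) * ∫⁻ x, h x ^ 2 ∂μ) ^ (1 / 2 : ℝ) := by
  have hadd : Measurable fun p : X × X => p.1 + p.2 := measurable_add
  have := tri_aux (μ := μ) (A := fun y z => h (y + z) * G z)
    (B := fun y z => K y z ^ (1 / 2 : ℝ) * F y)
    ((hh.comp hadd).mul (hG.comp measurable_snd))
    ((hK.pow_const _).mul (hF.comp measurable_fst))
    ((∫⁻ x, h x ^ 2 ∂μ) * ∫⁻ x, G x ^ 2 ∂μ) (C * ∫⁻ x, F x ^ 2 ∂μ) ?_ ?_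
  · refine le_trans (le_of_eq ?_) (this.trans (le_of_eq ?_))
    · exact lintegral_congr fun y => lintegral_congr fun z => by ring
    · congr 1; ring
  · simp only [mul_pow]
    rw [lintegral_lintegral_swap (((hh.comp hadd).pow_const 2).mul
      ((hG.comp measurable_snd).pow_const 2)).aemeasurable]
    have e : ∀ z, ∫⁻ y, h (y + z) ^ 2 * G z ^ 2 ∂μ = (∫⁻ y, h y ^ 2 ∂μ) * G z ^ 2 := fun z => by
      rw [lintegral_mul_const _ (by fun_prop)]
      simp_rw [add_comm _ z]
      rw [lintegral_add_left_eq_self (fun y => h y ^ 2)]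
    simp only [e]
    rw [lintegral_const_mul _ (hG.pow_const 2)]
  · simp only [mul_pow, half_sq]
    have e : ∀ y, ∫⁻ z, K y z * F y ^ 2 ∂μ ≤ C * F y ^ 2 := fun y => by
      rw [lintegral_mul_const _ hK.of_uncurry_left]
      gcongr
      refine le_of_eq_of_le ?_ (hC y)
      rw [← lintegral_add_left_eq_self (fun x => K y (x - y)) y]
      simp
    refine (lintegral_mono e).trans (le_of_eq ?_)
    rw [lintegral_const_mul _ (hF.pow_const 2)]

/-- Pairing a weighted convolution with `h`, in the variables of the two factors. -/
lemma pairing_eq {W : X → X → ℝ≥0∞} (hW : Measurable (Function.uncurry W)) (hh : Measurable h)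
    (hF : Measurable F) (hG : Measurable G) :
    ∫⁻ x, h x * ∫⁻ y, W x y * (F y * G (x - y)) ∂μ ∂μ =
      ∫⁻ y, ∫⁻ z, W (y + z) y * (h (y + z) * F y * G z) ∂μ ∂μ := by
  have hI : Measurable fun p : X × X => W p.1 p.2 * (F p.2 * G (p.1 - p.2)) :=
    hW.mul ((hF.comp measurable_snd).mul (hG.comp measurable_sub))
  calc _ = ∫⁻ x, ∫⁻ y, h x * (W x y * (F y * G (x - y))) ∂μ ∂μ := by
        refine lintegral_congr fun x => ?_
        rw [lintegral_const_mul]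
        exact hI.comp measurable_prodMk_left
    _ = ∫⁻ y, ∫⁻ x, h x * (W x y * (F y * G (x - y))) ∂μ ∂μ :=
        lintegral_lintegral_swap ((hh.comp measurable_fst).mul hI).aemeasurable
    _ = _ := by
        refine lintegral_congr fun y => ?_
        rw [← lintegral_add_left_eq_self _ y]
        refine lintegral_congr fun z => ?_
        rw [add_sub_cancel_left]
        ring

end Trilinear

/-! ### The kernels of the four regions -/

/-- The measure `(1/λ) Σ_k ∫ dτ` on `ℤ × ℝ`, the frequency being `k = m/λ`. -/
def muL (lam : ℝ) : Measure (ℤ × ℝ) :=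
  (ENNReal.ofReal (1 / lam) • Measure.count).prod volume

instance (lam : ℝ) : SigmaFinite (ENNReal.ofReal (1 / lam) • (Measure.count : Measure ℤ)) :=
  SMul.sigmaFinite (μ := (Measure.count : Measure ℤ)) (Real.toNNReal (1 / lam))

instance (lam : ℝ) : SigmaFinite (muL lam) := by unfold muL; infer_instance

instance (lam : ℝ) : (muL lam).IsAddLeftInvariant := by unfold muL; infer_instance

lemma lintegral_muL (lam : ℝ) {F : ℤ × ℝ → ℝ≥0∞} (hF : Measurable F) :
    ∫⁻ x, F x ∂(muL lam) = ENNReal.ofReal (1 / lam) * ∑' m : ℤ, ∫⁻ τ, F (m, τ) := by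
  rw [muL, lintegral_prod _ hF.aemeasurable, lintegral_smul_measure, lintegral_count, smul_eq_mul]

/-- The modulation as a function on `ℤ × ℝ`. -/
def sg (j : ℕ) (lam : ℝ) (x : ℤ × ℝ) : ℝ := sigL j lam x.1 x.2

lemma measurable_sg (j : ℕ) (lam : ℝ) : Measurable (sg j lam) := by
  have : Measurable fun x : ℤ × ℝ => (x.1 : ℝ) :=
    (measurable_of_countable (fun m : ℤ => (m : ℝ))).comp measurable_fst
  unfold sg sigL
  fun_prop

/-- Squared kernel of the region `⟨σ₁⟩ ≤ ⟨σ⟩ ≤ |q|^p`, where `y` carries `σ₁`, `y + z` carries `σ`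
and `q` is the frequency of `z`. -/
def nearOut (j : ℕ) (lam θ κ : ℝ) (y z : ℤ × ℝ) : ℝ≥0∞ :=
  if jap (sg j lam y) ≤ jap (sg j lam (y + z)) ∧
      jap (sg j lam (y + z)) ≤ |(z.1 : ℝ) / lam| ^ (2 * j + 1) then
    ENNReal.ofReal (jap (sg j lam (y + z)) ^ (-θ) * jap (sg j lam y) ^ (-κ)) else 0

/-- Squared kernel of the region `⟨σ⟩ ≤ ⟨σ₁⟩ ≤ |q|^p`. -/
def nearIn (j : ℕ) (lam θ κ : ℝ) (y z : ℤ × ℝ) : ℝ≥0∞ :=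
  if jap (sg j lam (y + z)) ≤ jap (sg j lam y) ∧
      jap (sg j lam y) ≤ |(z.1 : ℝ) / lam| ^ (2 * j + 1) then
    ENNReal.ofReal (jap (sg j lam y) ^ (-θ) * jap (sg j lam (y + z)) ^ (-κ)) else 0

/-- Squared kernel of the region `max (⟨σ₁⟩, |q|^p) ≤ ⟨σ⟩`. -/
def farOut (j : ℕ) (lam θ κ : ℝ) (y z : ℤ × ℝ) : ℝ≥0∞ :=
  if |(z.1 : ℝ) / lam| ^ (2 * j + 1) ≤ jap (sg j lam (y + z)) ∧
      jap (sg j lam y) ≤ jap (sg j lam (y + z)) then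
    ENNReal.ofReal (jap (sg j lam (y + z)) ^ (-θ) * jap (sg j lam y) ^ (-κ)) else 0

/-- Squared kernel of the region `max (⟨σ⟩, |q|^p) ≤ ⟨σ₁⟩`. -/
def farIn (j : ℕ) (lam θ κ : ℝ) (y z : ℤ × ℝ) : ℝ≥0∞ :=
  if |(z.1 : ℝ) / lam| ^ (2 * j + 1) ≤ jap (sg j lam y) ∧
      jap (sg j lam (y + z)) ≤ jap (sg j lam y) then
    ENNReal.ofReal (jap (sg j lam y) ^ (-θ) * jap (sg j lam (y + z)) ^ (-κ)) else 0

lemma measurable_kernels (j : ℕ) (lam θ κ : ℝ) :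
    Measurable (Function.uncurry (nearOut j lam θ κ)) ∧
    Measurable (Function.uncurry (nearIn j lam θ κ)) ∧
    Measurable (Function.uncurry (farOut j lam θ κ)) ∧
    Measurable (Function.uncurry (farIn j lam θ κ)) := by
  have h1 : Measurable fun p : (ℤ × ℝ) × (ℤ × ℝ) => jap (sg j lam p.1) :=
    measurable_jap.comp ((measurable_sg j lam).comp measurable_fst)
  have h2 : Measurable fun p : (ℤ × ℝ) × (ℤ × ℝ) => jap (sg j lam (p.1 + p.2)) :=
    measurable_jap.comp ((measurable_sg j lam).comp measurable_add)
  have h3 : Measurable fun p : (ℤ × ℝ) × (ℤ × ℝ) => |(p.2.1 : ℝ) / lam| ^ (2 * j + 1) :=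
    (measurable_of_countable (fun m : ℤ => |(m : ℝ) / lam| ^ (2 * j + 1))).comp
      (measurable_fst.comp measurable_snd)
  refine ⟨?_, ?_, ?_, ?_⟩
  · exact Measurable.ite ((measurableSet_le h1 h2).inter (measurableSet_le h2 h3))
      ((h2.pow_const _).mul (h1.pow_const _)).ennreal_ofReal measurable_const
  · exact Measurable.ite ((measurableSet_le h2 h1).inter (measurableSet_le h1 h3))
      ((h1.pow_const _).mul (h2.pow_const _)).ennreal_ofReal measurable_const
  · exact Measurable.ite ((measurableSet_le h3 h2).inter (measurableSet_le h1 h2))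
      ((h2.pow_const _).mul (h1.pow_const _)).ennreal_ofReal measurable_const
  · exact Measurable.ite ((measurableSet_le h3 h1).inter (measurableSet_le h2 h1))
      ((h1.pow_const _).mul (h2.pow_const _)).ennreal_ofReal measurable_const

lemma measurable_of_uncurry {α : Type*} [MeasurableSpace α] {K : α → α → ℝ≥0∞}
    (hK : Measurable (Function.uncurry K)) {φ ψ : α → α} (hφ : Measurable φ) (hψ : Measurable ψ) :
    Measurable fun y => K (φ y) (ψ y) :=
  hK.comp (hφ.prodMk hψ)

/-- With `x = y + z` fixed, `⟨σ⟩` is the fixed larger bracket. -/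
lemma farOut_bound (j : ℕ) (θ κ : ℝ) (h0 : 0 < κ) (h1 : κ < 1)
    (hκ : κ = 1 + 1 / (2 * (j : ℝ) + 1) - θ) (lam : ℝ) (hlam : 1 ≤ lam) (x : ℤ × ℝ) :
    ∫⁻ y, farOut j lam θ κ y (x - y) ∂(muL lam) ≤ ENNReal.ofReal (6 / (1 - κ)) := by
  have hm : Measurable fun y => farOut j lam θ κ y (x - y) :=
    measurable_of_uncurry (measurable_kernels j lam θ κ).2.2.1 measurable_id
      (measurable_const.sub measurable_id)
  rw [lintegral_muL _ hm]
  refine le_of_eq_of_le ?_ (far_bound j θ κ h0 h1 hκ lam hlam x.1 (jap (sg j lam x)) (one_le_jap _))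
  congr 1
  refine tsum_congr fun m => lintegral_congr fun τ => ?_
  have e : |((x.1 - m : ℤ) : ℝ) / lam| = |((m - x.1 : ℤ) : ℝ) / lam| := by
    rw [← abs_neg]; congr 1; push_cast; ring
  simp only [farOut, add_sub_cancel, Prod.fst_sub, e]
  rfl

/-- With `y` fixed, `⟨σ₁⟩` is the fixed larger bracket. -/
lemma farIn_bound (j : ℕ) (θ κ : ℝ) (h0 : 0 < κ) (h1 : κ < 1)
    (hκ : κ = 1 + 1 / (2 * (j : ℝ) + 1) - θ) (lam : ℝ) (hlam : 1 ≤ lam) (y : ℤ × ℝ) :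
    ∫⁻ x, farIn j lam θ κ y (x - y) ∂(muL lam) ≤ ENNReal.ofReal (6 / (1 - κ)) := by
  have hm : Measurable fun x => farIn j lam θ κ y (x - y) :=
    measurable_of_uncurry (measurable_kernels j lam θ κ).2.2.2 measurable_const
      (measurable_id.sub measurable_const)
  rw [lintegral_muL _ hm]
  refine le_of_eq_of_le ?_ (far_bound j θ κ h0 h1 hκ lam hlam y.1 (jap (sg j lam y)) (one_le_jap _))
  congr 1
  refine tsum_congr fun m => lintegral_congr fun τ => ?_
  simp only [farIn, add_sub_cancel, Prod.fst_sub]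
  rfl

/-- With `z` fixed, the frequency `q` is fixed. -/
lemma near_kernels_bound (j : ℕ) (hj : 1 ≤ j) (θ κ : ℝ) (hθ0 : 0 < θ) (hθ1 : 2 * (j : ℝ) * θ < 1)
    (h0 : 0 < κ) (h1 : κ < 1) (hκ : κ = 1 + 1 / (2 * (j : ℝ) + 1) - θ) :
    ∃ C : ℝ, 0 ≤ C ∧ ∀ lam : ℝ, 1 ≤ lam → ∀ z : ℤ × ℝ,
      ∫⁻ y, nearOut j lam θ κ y z ∂(muL lam) ≤ ENNReal.ofReal C ∧
      ∫⁻ y, nearIn j lam θ κ y z ∂(muL lam) ≤ ENNReal.ofReal C := by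
  obtain ⟨C, hC0, hC⟩ := near_bound j hj θ κ hθ0 hθ1 h0 h1 hκ
  refine ⟨C, hC0, fun lam hlam z => ⟨?_, ?_⟩⟩
  · have hm : Measurable fun y => nearOut j lam θ κ y z :=
      measurable_of_uncurry (measurable_kernels j lam θ κ).1 measurable_id measurable_const
    rw [lintegral_muL _ hm]
    refine le_of_eq_of_le ?_ (hC lam hlam ((z.1 : ℝ) / lam) (fun s => s + z.2) (by fun_prop))
    congr 1
    refine tsum_congr fun m => ?_
    -- integrate in the modulation `s = σ₁`
    rw [← lintegral_add_right_eq_self _ (((m : ℝ) / lam) ^ (2 * j + 1))]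
    refine lintegral_congr fun s => ?_
    have e1 : sg j lam (m, s + ((m : ℝ) / lam) ^ (2 * j + 1)) = s := by simp [sg, sigL]
    have e2 : sg j lam ((m, s + ((m : ℝ) / lam) ^ (2 * j + 1)) + z) = s + z.2 -
        (((m : ℝ) / lam + (z.1 : ℝ) / lam) ^ (2 * j + 1) - ((m : ℝ) / lam) ^ (2 * j + 1)) := by
      simp only [sg, sigL, Prod.fst_add, Prod.snd_add]
      push_cast
      rw [add_div]; ring
    simp only [nearOut, e1, e2]
  · have hm : Measurable fun y => nearIn j lam θ κ y z :=
      measurable_of_uncurry (measurable_kernels j lam θ κ).2.1 measurable_id measurable_const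
    rw [lintegral_muL _ hm]
    refine le_of_eq_of_le ?_ (hC lam hlam ((z.1 : ℝ) / lam) (fun s => z.2 - s) (by fun_prop))
    congr 1
    refine tsum_congr fun m => ?_
    -- integrate in the modulation `s = σ`
    rw [← lintegral_add_right_eq_self _
      (((m : ℝ) / lam + (z.1 : ℝ) / lam) ^ (2 * j + 1) - z.2)]
    refine lintegral_congr fun s => ?_
    have e1 : jap (sg j lam (m, s + (((m : ℝ) / lam + (z.1 : ℝ) / lam) ^ (2 * j + 1) - z.2))) =
        jap (z.2 - s - (((m : ℝ) / lam + (z.1 : ℝ) / lam) ^ (2 * j + 1) -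
          ((m : ℝ) / lam) ^ (2 * j + 1))) := by
      rw [← jap_neg]; congr 1; simp only [sg, sigL]; ring
    have e2 : sg j lam ((m, s + (((m : ℝ) / lam + (z.1 : ℝ) / lam) ^ (2 * j + 1) - z.2)) + z) =
        s := by
      simp only [sg, sigL, Prod.fst_add, Prod.snd_add]
      push_cast
      rw [add_div]; ring
    simp only [nearIn, e1, e2]

/-- Part of the decay in the larger bracket `S` is given up in favour of the smaller one, so that
the exponent of `S` becomes exactly `-θ/2`. -/
lemma weight_le (a b θ κ S s : ℝ) (hs : 1 ≤ s) (hsS : s ≤ S) (ha : θ / 2 ≤ a)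
    (hab : (θ + κ) / 2 ≤ a + b) :
    S ^ (-a) * s ^ (-b) ≤ (S ^ (-θ) * s ^ (-κ)) ^ (1 / 2 : ℝ) := by
  have hs0 : 0 < s := by linarith
  have hS0 : 0 < S := by linarith
  rw [Real.mul_rpow (by positivity) (by positivity), ← Real.rpow_mul hS0.le,
    ← Real.rpow_mul hs0.le]
  calc S ^ (-a) * s ^ (-b) = S ^ (-θ * (1 / 2)) * (S ^ (-(a - θ / 2)) * s ^ (-b)) := by
        rw [← mul_assoc, ← Real.rpow_add hS0]; congr 2; ring
    _ ≤ S ^ (-θ * (1 / 2)) * (s ^ (-(a - θ / 2)) * s ^ (-b)) := by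
        exact mul_le_mul_of_nonneg_left (mul_le_mul_of_nonneg_right
          (Real.rpow_le_rpow_of_nonpos hs0 hsS (by linarith)) (by positivity)) (by positivity)
    _ = S ^ (-θ * (1 / 2)) * s ^ (-(a - θ / 2) + -b) := by rw [← Real.rpow_add hs0]
    _ ≤ _ := by
        exact mul_le_mul_of_nonneg_left
          (Real.rpow_le_rpow_of_exponent_le hs (by linarith)) (by positivity)

/-- The four regions cover everything. -/
lemma kernel_le (j : ℕ) (lam a b θ κ : ℝ) (ha : θ / 2 ≤ a) (hb : θ / 2 ≤ b)
    (hab : (θ + κ) / 2 ≤ a + b) (y z : ℤ × ℝ) :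
    ENNReal.ofReal (jap (sg j lam (y + z)) ^ (-a) * jap (sg j lam y) ^ (-b)) ≤
      nearOut j lam θ κ y z ^ (1 / 2 : ℝ) + nearIn j lam θ κ y z ^ (1 / 2 : ℝ) +
      farOut j lam θ κ y z ^ (1 / 2 : ℝ) + farIn j lam θ κ y z ^ (1 / 2 : ℝ) := by
  set S := jap (sg j lam (y + z)) with hS
  set s := jap (sg j lam y) with hs
  have hS0 : 0 < S := jap_pos _
  have hs0 : 0 < s := jap_pos _
  have hof : ∀ A B : ℝ, 0 ≤ A → B ≤ A ^ (1 / 2 : ℝ) →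
      ENNReal.ofReal B ≤ ENNReal.ofReal A ^ (1 / 2 : ℝ) := fun A B hA hB => by
    rw [ENNReal.ofReal_rpow_of_nonneg hA (by norm_num)]
    exact ENNReal.ofReal_le_ofReal hB
  rcases le_total s S with h | h
  · have hw := hof _ _ (by positivity) (weight_le a b θ κ S s (one_le_jap _) h ha hab)
    rcases le_total S (|(z.1 : ℝ) / lam| ^ (2 * j + 1)) with h' | h'
    · refine hw.trans ?_
      rw [nearOut, if_pos ⟨h, h'⟩, add_assoc, add_assoc]
      exact le_self_add
    · refine hw.trans ?_
      rw [farOut, if_pos ⟨h', h⟩, add_right_comm]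
      exact le_add_self
  · have hw := hof _ _ (by positivity)
      (weight_le b a θ κ s S (one_le_jap _) h hb (by linarith))
    rw [mul_comm (s ^ (-b))] at hw
    rcases le_total s (|(z.1 : ℝ) / lam| ^ (2 * j + 1)) with h' | h'
    · refine hw.trans ?_
      rw [nearIn, if_pos ⟨h, h'⟩, add_assoc, add_assoc, add_left_comm]
      exact le_self_add
    · refine hw.trans ?_
      rw [farIn, if_pos ⟨h', h⟩]
      exact le_add_self

/-! ### The bilinear estimate -/

/-- The weighted convolution `⟨σ⟩^{-a} (⟨σ₁⟩^{-b} F ∗ G)`. -/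
def wconv (j : ℕ) (lam a b : ℝ) (F G : ℤ × ℝ → ℝ≥0∞) (x : ℤ × ℝ) : ℝ≥0∞ :=
  ∫⁻ y, ENNReal.ofReal (jap (sg j lam x) ^ (-a) * jap (sg j lam y) ^ (-b)) *
    (F y * G (x - y)) ∂(muL lam)

lemma measurable_weight (j : ℕ) (lam a b : ℝ) :
    Measurable (Function.uncurry fun x y : ℤ × ℝ =>
      ENNReal.ofReal (jap (sg j lam x) ^ (-a) * jap (sg j lam y) ^ (-b))) := by
  have h1 : Measurable fun p : (ℤ × ℝ) × (ℤ × ℝ) => jap (sg j lam p.1) :=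
    measurable_jap.comp ((measurable_sg j lam).comp measurable_fst)
  have h2 : Measurable fun p : (ℤ × ℝ) × (ℤ × ℝ) => jap (sg j lam p.2) :=
    measurable_jap.comp ((measurable_sg j lam).comp measurable_snd)
  exact ((h1.pow_const _).mul (h2.pow_const _)).ennreal_ofReal

lemma measurable_wconv (j : ℕ) (lam a b : ℝ) {F G : ℤ × ℝ → ℝ≥0∞} (hF : Measurable F)
    (hG : Measurable G) : Measurable (wconv j lam a b F G) := by
  have h : Measurable fun p : (ℤ × ℝ) × (ℤ × ℝ) =>
      ENNReal.ofReal (jap (sg j lam p.1) ^ (-a) * jap (sg j lam p.2) ^ (-b)) *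
        (F p.2 * G (p.1 - p.2)) :=
    (measurable_weight j lam a b).mul
      ((hF.comp measurable_snd).mul (hG.comp measurable_sub))
  exact h.lintegral_prod_right'

/-- The trilinear form with the full weight, by Cauchy–Schwarz in each of the four regions. -/
lemma trilinear_le (j : ℕ) (lam a b θ κ : ℝ) (ha : θ / 2 ≤ a) (hb : θ / 2 ≤ b)
    (hab : (θ + κ) / 2 ≤ a + b) (C : ℝ≥0∞)
    (h1 : ∀ z, ∫⁻ y, nearOut j lam θ κ y z ∂(muL lam) ≤ C)
    (h2 : ∀ z, ∫⁻ y, nearIn j lam θ κ y z ∂(muL lam) ≤ C)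
    (h3 : ∀ x, ∫⁻ y, farOut j lam θ κ y (x - y) ∂(muL lam) ≤ C)
    (h4 : ∀ y, ∫⁻ x, farIn j lam θ κ y (x - y) ∂(muL lam) ≤ C)
    {F G h : ℤ × ℝ → ℝ≥0∞} (hF : Measurable F) (hG : Measurable G) (hh : Measurable h) :
    ∫⁻ y, ∫⁻ z, ENNReal.ofReal (jap (sg j lam (y + z)) ^ (-a) * jap (sg j lam y) ^ (-b)) *
        (h (y + z) * F y * G z) ∂(muL lam) ∂(muL lam) ≤
      4 * (C * ((∫⁻ x, F x ^ 2 ∂(muL lam)) * ∫⁻ x, G x ^ 2 ∂(muL lam)) *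
        ∫⁻ x, h x ^ 2 ∂(muL lam)) ^ (1 / 2 : ℝ) := by
  obtain ⟨m1, m2, m3, m4⟩ := measurable_kernels j lam θ κ
  have t1 := tri_le_fix_diff m1 hh hF hG C h1
  have t2 := tri_le_fix_diff m2 hh hF hG C h2
  have t3 := tri_le_fix_sum m3 hh hF hG C h3
  have t4 := tri_le_fix_left m4 hh hF hG C h4
  generalize (C * ((∫⁻ x, F x ^ 2 ∂(muL lam)) * ∫⁻ x, G x ^ 2 ∂(muL lam)) *
        ∫⁻ x, h x ^ 2 ∂(muL lam)) ^ (1 / 2 : ℝ) = M at *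
  have hH : Measurable fun p : (ℤ × ℝ) × (ℤ × ℝ) => h (p.1 + p.2) * F p.1 * G p.2 :=
    ((hh.comp measurable_add).mul (hF.comp measurable_fst)).mul (hG.comp measurable_snd)
  have hm : ∀ {K : ℤ × ℝ → ℤ × ℝ → ℝ≥0∞}, Measurable (Function.uncurry K) →
      Measurable (Function.uncurry fun y z => K y z ^ (1 / 2 : ℝ) * (h (y + z) * F y * G z)) :=
    fun hK => (hK.pow_const _).mul hH
  have hl : ∀ {K : ℤ × ℝ → ℤ × ℝ → ℝ≥0∞}, Measurable (Function.uncurry K) →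
      Measurable fun y => ∫⁻ z, K y z ^ (1 / 2 : ℝ) * (h (y + z) * F y * G z) ∂(muL lam) :=
    fun hK => (hm hK).lintegral_prod_right'
  have key : ∫⁻ y, ∫⁻ z,
      ENNReal.ofReal (jap (sg j lam (y + z)) ^ (-a) * jap (sg j lam y) ^ (-b)) *
        (h (y + z) * F y * G z) ∂(muL lam) ∂(muL lam) ≤
      tri (muL lam) (nearOut j lam θ κ) h F G + tri (muL lam) (nearIn j lam θ κ) h F G +
      tri (muL lam) (farOut j lam θ κ) h F G + tri (muL lam) (farIn j lam θ κ) h F G := by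
    unfold tri
    rw [← lintegral_add_right _ (hl m2), ← lintegral_add_right _ (hl m3),
      ← lintegral_add_right _ (hl m4)]
    refine lintegral_mono fun y => ?_
    calc _ ≤ ∫⁻ z, (nearOut j lam θ κ y z ^ (1 / 2 : ℝ) * (h (y + z) * F y * G z) +
          nearIn j lam θ κ y z ^ (1 / 2 : ℝ) * (h (y + z) * F y * G z) +
          farOut j lam θ κ y z ^ (1 / 2 : ℝ) * (h (y + z) * F y * G z) +
          farIn j lam θ κ y z ^ (1 / 2 : ℝ) * (h (y + z) * F y * G z)) ∂(muL lam) := by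
          refine lintegral_mono fun z => ?_
          rw [← add_mul, ← add_mul, ← add_mul]
          exact mul_le_mul_left (kernel_le j lam a b θ κ ha hb hab y z) _
      _ = _ := by
          rw [lintegral_add_right _ (hm m4).of_uncurry_left,
            lintegral_add_right _ (hm m3).of_uncurry_left,
            lintegral_add_right _ (hm m2).of_uncurry_left]
  refine key.trans ?_
  calc _ ≤ M + M + M + M := by gcongr
    _ = 4 * M := by ring

/-- The `L²` bound for the weighted convolution, given the four kernel bounds with constant `C`. -/
lemma wconv_le (j : ℕ) (lam a b θ κ : ℝ) (ha : θ / 2 ≤ a) (hb : θ / 2 ≤ b)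
    (hab : (θ + κ) / 2 ≤ a + b) (C : ℝ≥0∞)
    (h1 : ∀ z, ∫⁻ y, nearOut j lam θ κ y z ∂(muL lam) ≤ C)
    (h2 : ∀ z, ∫⁻ y, nearIn j lam θ κ y z ∂(muL lam) ≤ C)
    (h3 : ∀ x, ∫⁻ y, farOut j lam θ κ y (x - y) ∂(muL lam) ≤ C)
    (h4 : ∀ y, ∫⁻ x, farIn j lam θ κ y (x - y) ∂(muL lam) ≤ C)
    {F G : ℤ × ℝ → ℝ≥0∞} (hF : Measurable F) (hG : Measurable G) :
    ∫⁻ x, wconv j lam a b F G x ^ 2 ∂(muL lam) ≤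
      16 * (C * ((∫⁻ x, F x ^ 2 ∂(muL lam)) * ∫⁻ x, G x ^ 2 ∂(muL lam))) := by
  refine l2_le_of_dual _ _ fun h hh => ?_
  have e : ∫⁻ x, h x * wconv j lam a b F G x ∂(muL lam) =
      ∫⁻ y, ∫⁻ z, ENNReal.ofReal (jap (sg j lam (y + z)) ^ (-a) * jap (sg j lam y) ^ (-b)) *
        (h (y + z) * F y * G z) ∂(muL lam) ∂(muL lam) :=
    pairing_eq (μ := muL lam) (measurable_weight j lam a b) hh hF hG
  rw [e]
  refine (trilinear_le j lam a b θ κ ha hb hab C h1 h2 h3 h4 hF hG hh).trans (le_of_eq ?_)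
  rw [mul_assoc 16, ENNReal.mul_rpow_of_nonneg 16 _ (by norm_num)]
  congr 1
  rw [show (16 : ℝ≥0∞) = 4 ^ (2 : ℝ) by norm_num, ← ENNReal.rpow_mul]
  norm_num

/-- Here `⟨σ⟩^{-b} (⟨σ⟩^b f) = f` cancels the weights; the inequality comes from the zero frequencies,
which `convL` leaves out of the sum. -/
lemma wtL_convL_le (j : ℕ) (lam a b : ℝ) {f g : ℤ → ℝ → ℝ≥0∞}
    (hf : Measurable (Function.uncurry f)) (hg : Measurable (Function.uncurry g)) (m : ℤ) (τ : ℝ) :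
    wtL j lam (-a) (convL lam f g) m τ ≤
      wconv j lam a b (Function.uncurry (wtL j lam b f)) (Function.uncurry g) (m, τ) := by
  have hfg : Measurable fun y : ℤ × ℝ =>
      Function.uncurry f y * Function.uncurry g ((m, τ) - y) :=
    hf.mul (hg.comp (measurable_const.sub measurable_id))
  have e : wconv j lam a b (Function.uncurry (wtL j lam b f)) (Function.uncurry g) (m, τ) =
      ENNReal.ofReal (jap (sigL j lam m τ) ^ (-a)) * ∫⁻ y : ℤ × ℝ,
        Function.uncurry f y * Function.uncurry g ((m, τ) - y) ∂(muL lam) := by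
    rw [wconv, ← lintegral_const_mul _ hfg]
    refine lintegral_congr fun y => ?_
    have h0 : 0 < jap (sg j lam y) := jap_pos _
    have h1 : ENNReal.ofReal (jap (sg j lam y) ^ (-b)) * ENNReal.ofReal (jap (sg j lam y) ^ b) =
        1 := by
      rw [← ENNReal.ofReal_mul (by positivity), ← Real.rpow_add h0]; simp
    have h2 : Function.uncurry (wtL j lam b f) y =
        ENNReal.ofReal (jap (sg j lam y) ^ b) * Function.uncurry f y := rfl
    have h3 : sg j lam (m, τ) = sigL j lam m τ := rfl
    rw [h2, h3, ENNReal.ofReal_mul (Real.rpow_nonneg (jap_pos _).le _)]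
    calc _ = ENNReal.ofReal (jap (sigL j lam m τ) ^ (-a)) *
          ((ENNReal.ofReal (jap (sg j lam y) ^ (-b)) * ENNReal.ofReal (jap (sg j lam y) ^ b)) *
          (Function.uncurry f y * Function.uncurry g ((m, τ) - y))) := by ring
      _ = _ := by rw [h1, one_mul]
  rw [e, lintegral_muL _ hfg, wtL, convL]
  refine mul_le_mul_right (mul_le_mul_right (ENNReal.tsum_le_tsum fun m₁ => ?_) _) _
  split_ifs
  · exact le_rfl
  · exact zero_le

lemma L2L_eq (lam : ℝ) {f : ℤ → ℝ → ℝ≥0∞} (hf : Measurable (Function.uncurry f)) :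
    L2L lam f = (∫⁻ x, Function.uncurry f x ^ 2 ∂(muL lam)) ^ (1 / 2 : ℝ) := by
  rw [lintegral_muL _ (hf.pow_const 2)]; rfl

/-- **Lemma 2.3, second estimate:** λ-uniform dual bilinear estimate
`‖uv‖_{X_{0,−a}} ≤ C‖u‖_{X_{0,b}}‖v‖_{L²_{xt}}` on the Fourier side. -/
theorem stmt_7 (j : ℕ) (hj : 1 ≤ j) (a b : ℝ)
    (hab : ((j : ℝ) + 1) / (2 * (j : ℝ) + 1) ≤ a + b)
    (hmin : 1 / (2 * (2 * (j : ℝ) + 1)) < min a b) :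
    ∃ C : ℝ, 0 < C ∧ ∀ lam : ℝ, 1 ≤ lam → ∀ f g : ℤ → ℝ → ℝ≥0∞,
      Measurable (Function.uncurry f) → Measurable (Function.uncurry g) →
      (∀ τ, f 0 τ = 0) → (∀ τ, g 0 τ = 0) →
      L2L lam (wtL j lam (-a) (convL lam f g)) ≤
        ENNReal.ofReal C * L2L lam (wtL j lam b f) * L2L lam g := by
  have hj' : (1 : ℝ) ≤ j := by exact_mod_cast hj
  have hp : 1 / (2 * (j : ℝ) + 1) < min (2 * min a b) (1 / (2 * (j : ℝ))) := by
    refine lt_min ?_ (one_div_lt_one_div_of_lt (by positivity) (by linarith))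
    rw [one_div, mul_inv] at hmin
    rw [one_div]; linarith
  -- `1/p < θ < 1/(2j)` makes `κ < 1` and the resonant sum convergent; `θ ≤ 2 min(a,b)` makes the
  -- redistribution of the weights admissible
  obtain ⟨θ, hθ1, hθ2⟩ := exists_between hp
  obtain ⟨hθ2, hθ3⟩ := lt_min_iff.1 hθ2
  have hp0 : 0 < 1 / (2 * (j : ℝ) + 1) := by positivity
  have hθ0 : 0 < θ := hp0.trans hθ1
  have hθj : 2 * (j : ℝ) * θ < 1 := by
    rw [lt_div_iff₀ (by positivity)] at hθ3; linarith
  have hθ' : θ < 1 := by nlinarith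
  obtain ⟨κ, hκ⟩ : ∃ κ, κ = 1 + 1 / (2 * (j : ℝ) + 1) - θ := ⟨_, rfl⟩
  have hκ0 : 0 < κ := by linarith
  have hκ1 : κ < 1 := by linarith
  have ha : θ / 2 ≤ a := by linarith [min_le_left a b]
  have hb : θ / 2 ≤ b := by linarith [min_le_right a b]
  have hab' : (θ + κ) / 2 ≤ a + b := by
    refine le_trans (le_of_eq ?_) hab
    rw [hκ]; field_simp; ring
  obtain ⟨C, hC0, hC⟩ := near_kernels_bound j hj θ κ hθ0 hθj hκ0 hκ1 hκ
  set D : ℝ := max C (6 / (1 - κ)) with hD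
  have hD0 : 0 < D := lt_max_of_lt_right (div_pos (by norm_num) (by linarith))
  refine ⟨(16 * D) ^ (1 / 2 : ℝ), by positivity, fun lam hlam f g hf hg _ _ => ?_⟩
  have hCD := ENNReal.ofReal_le_ofReal (le_max_left C (6 / (1 - κ)))
  have hKD := ENNReal.ofReal_le_ofReal (le_max_right C (6 / (1 - κ)))
  have hF : Measurable (Function.uncurry (wtL j lam b f)) :=
    ((measurable_jap.comp (measurable_sg j lam)).pow_const b).ennreal_ofReal.mul hf
  have hconv : Measurable
      (wconv j lam a b (Function.uncurry (wtL j lam b f)) (Function.uncurry g)) :=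
    measurable_wconv j lam a b hF hg
  have main := wconv_le j lam a b θ κ ha hb hab' (ENNReal.ofReal D)
    (fun z => (hC lam hlam z).1.trans hCD) (fun z => (hC lam hlam z).2.trans hCD)
    (fun x => (farOut_bound j θ κ hκ0 hκ1 hκ lam hlam x).trans hKD)
    (fun y => (farIn_bound j θ κ hκ0 hκ1 hκ lam hlam y).trans hKD) hF hg
  rw [lintegral_muL _ (hconv.pow_const 2)] at main
  rw [L2L_eq lam hF, L2L_eq lam hg, ← ENNReal.ofReal_rpow_of_pos (by positivity),
    ← ENNReal.mul_rpow_of_nonneg _ _ (by norm_num), ← ENNReal.mul_rpow_of_nonneg _ _ (by norm_num),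
    L2L, ENNReal.ofReal_mul (by norm_num), ENNReal.ofReal_ofNat, mul_assoc, mul_assoc]
  refine ENNReal.rpow_le_rpow (le_trans ?_ main) (by norm_num)
  gcongr with m τ
  exact wtL_convL_le j lam a b hf hg m _

end
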